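/- Every morphism of tiled surfaces f: Y → Z with Y boundary reduced is π_1-injective, i.e., the induced map on fundamental groups (of each component, at any basepoint) is injective. -/

import Mathlib

/-!
Formalization preamble for "Core Surfaces" (Magee–Puder).

We work with a fixed combinatorial (CW) model.  The surface `Σ_g` has one vertex,
`2g` directed labeled edges (the label `2i` plays the role of `a_{i+1}` and `2i+1`
the role of `b_{i+1}`), and one `4g`-gon glued along `[a₁,b₁]⋯[a_g,b_g]`.

* `Gamma g` is the surface group, presented by the single relator.
* A `Complex g` is a combinatorial 2-complex with directed, labeled edges and
  2-cells given by their boundary walks; coverings of `Σ_g` are the complexes in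
  which every vertex has exactly one incoming/outgoing edge of each label, every
  walk reading the relator is closed, and every closed walk reading the relator
  bounds exactly one face (`IsCovering`).  A tiled surface is a complex that
  embeds into such a covering (`IsTiledSurface`).
* Blocks, chains, boundary cycles (via the ribbon structure coming from the fixed
  cyclic order of the `4g` half-edges around a vertex of `Σ_g`), boundary-reduced
  and strongly boundary-reduced surfaces are defined combinatorially.
* Homotopy of edge-walks is the edge-path-group homotopy: backtrack insertions and
  insertions of boundaries of (present) faces.
* `cover g J` is the covering space `J\~Σ_g` of `Σ_g` associated to a subgroup
  `J ≤ Γ_g` (vertices = right cosets), and `coreSub g J` is the core surface of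
  `J`, defined exactly as in the paper: the union of all shortest representative
  cycles of essential free-homotopy classes, together with all components of the
  complement containing finitely many `4g`-gons.
-/

noncomputable section

namespace CS

/-- Signed letters over the generators `a₁,b₁,…,a_g,b_g` of `Γ_g`
(`a_{i+1} ↦ 2i`, `b_{i+1} ↦ 2i+1`); `true` means a positive letter. -/
abbrev Letter (g : ℕ) := Fin (2 * g) × Bool

/-- The label of the `p`-th letter of the relator `[a₁,b₁][a₂,b₂]⋯[a_g,b_g]`. -/
def relLabel (g : ℕ) (p : Fin (4 * g)) : Fin (2 * g) :=
  ⟨2 * ((p : ℕ) / 4) + ((p : ℕ) % 4) % 2, by have := p.2; omega⟩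

/-- The sign of the `p`-th letter of the relator. -/
def relSign (g : ℕ) (p : Fin (4 * g)) : Bool := decide ((p : ℕ) % 4 < 2)

/-- The relator `[a₁,b₁][a₂,b₂]⋯[a_g,b_g]` as a word (list of signed letters). -/
def relatorWord (g : ℕ) : List (Letter g) :=
  (List.finRange (4 * g)).map fun p => (relLabel g p, relSign g p)

/-- The relator as an element of the free group on the `2g` generators. -/
def relatorF (g : ℕ) : FreeGroup (Fin (2 * g)) :=
  ((relatorWord g).map fun l => if l.2 then FreeGroup.of l.1 else (FreeGroup.of l.1)⁻¹).prod

/-- The surface group `Γ_g = ⟨a₁,b₁,…,a_g,b_g ∣ [a₁,b₁]⋯[a_g,b_g]⟩`. -/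
abbrev Gamma (g : ℕ) := PresentedGroup ({relatorF g} : Set (FreeGroup (Fin (2 * g))))

/-- The image of a signed letter in `Γ_g`. -/
def letterG {g : ℕ} (l : Letter g) : Gamma g :=
  if l.2 then PresentedGroup.of l.1 else (PresentedGroup.of l.1)⁻¹

/-- The image of a word in `Γ_g`. -/
def wordG {g : ℕ} (w : List (Letter g)) : Gamma g := (w.map letterG).prod

/-- `ℓ(γ^{Γ_g})`: the minimal length of a word in the generators representing the
conjugacy class of `γ` in `Γ_g`. -/
def conjLen {g : ℕ} (γ : Gamma g) : ℕ :=
  sInf {n | ∃ w : List (Letter g), w.length = n ∧ ∃ x : Gamma g, x * wordG w * x⁻¹ = γ}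

/-! ### Half-edge positions around a vertex of `Σ_g`

The `4g` half-edges around the vertex `o` of `Σ_g` come in the (clockwise) cyclic
order `a₁`-out, `b₁`-in, `a₁`-in, `b₁`-out, `a₂`-out, `b₂`-in, `a₂`-in, `b₂`-out, …
-/

/-- Position of the outgoing `ℓ`-labeled half-edge in the cyclic order. -/
def posOut {g : ℕ} (ℓ : Fin (2 * g)) : ℕ :=
  if (ℓ : ℕ) % 2 = 0 then 2 * (ℓ : ℕ) else 2 * (ℓ : ℕ) + 1

/-- Position of the incoming `ℓ`-labeled half-edge in the cyclic order. -/
def posIn {g : ℕ} (ℓ : Fin (2 * g)) : ℕ :=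
  if (ℓ : ℕ) % 2 = 0 then 2 * (ℓ : ℕ) + 2 else 2 * (ℓ : ℕ) - 1

/-- The position of the half-edge through which a traversal of a dart with signed
letter `s` *arrives* at its terminal vertex. -/
def posArr {g : ℕ} (s : Letter g) : ℕ := if s.2 then posIn s.1 else posOut s.1

/-- The position of the half-edge through which a traversal of a dart with signed
letter `s` *leaves* its initial vertex. -/
def posLv {g : ℕ} (s : Letter g) : ℕ := if s.2 then posOut s.1 else posIn s.1

/-- The number of half-edges strictly between the arrival half-edge of `s` and the
departure half-edge of `t`, in the clockwise cyclic order of the `4g` half-edges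
around a vertex. -/
def gapN {g : ℕ} (s t : Letter g) : ℕ := (posLv t + 4 * g - (posArr s + 1)) % (4 * g)

/-! ### Combinatorial complexes -/

/-- A combinatorial at-most-2-dimensional CW-complex with directed edges labeled by
the generators of `Γ_g`, and 2-cells recorded by their boundary walks (lists of
darts, i.e. edges with a direction of traversal). -/
structure Complex (g : ℕ) where
  V : Type
  E : Type
  F : Type
  src : E → V
  dst : E → V
  lab : E → Fin (2 * g)
  bdry : F → List (E × Bool)

namespace Complex

variable {g : ℕ} (Y : Complex g)

/-- Darts: edges together with a direction of traversal (`true` = forward). -/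
abbrev D := Y.E × Bool

/-- The initial vertex of a dart. -/
def dTail (d : Y.D) : Y.V := if d.2 then Y.src d.1 else Y.dst d.1

/-- The terminal vertex of a dart. -/
def dHead (d : Y.D) : Y.V := if d.2 then Y.dst d.1 else Y.src d.1

/-- The reversal of a dart. -/
def dRev (d : Y.D) : Y.D := (d.1, !d.2)

/-- The signed letter read by a dart. -/
def dLet (d : Y.D) : Letter g := (Y.lab d.1, d.2)

/-- The word read along a list of darts. -/
def wordOf (l : List Y.D) : List (Letter g) := l.map Y.dLet

/-- The reversed walk. -/
def revW (l : List Y.D) : List Y.D := (l.map Y.dRev).reverse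

/-- `WalkFrom u v l` : `l` is a walk (edge-path) from `u` to `v`. -/
inductive WalkFrom : Y.V → Y.V → List Y.D → Prop
  | nil (v : Y.V) : WalkFrom v v []
  | cons (d : Y.D) {v : Y.V} {l : List Y.D} :
      WalkFrom (Y.dHead d) v l → WalkFrom (Y.dTail d) v (d :: l)

/-- All darts of `l` use edges from the set `sE`. -/
def InSet (sE : Set Y.E) (l : List Y.D) : Prop := ∀ d ∈ l, d.1 ∈ sE

/-- Two darts are adjacent (can be traversed consecutively). -/
def adj (d d' : Y.D) : Prop := Y.dHead d = Y.dTail d'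

/-- A nonempty closed walk. -/
def IsCycle (c : List Y.D) : Prop := c ≠ [] ∧ ∃ v, Y.WalkFrom v v c

/-- **P1**: at most one incoming and at most one outgoing `ℓ`-labeled edge at every
vertex, for every label `ℓ`. -/
def P1 : Prop :=
  (∀ e e' : Y.E, Y.src e = Y.src e' → Y.lab e = Y.lab e' → e = e') ∧
  (∀ e e' : Y.E, Y.dst e = Y.dst e' → Y.lab e = Y.lab e' → e = e')

/-- **P2**: every walk reading a word equal to `1` in `Γ_g` is closed. -/
def P2 : Prop :=
  ∀ (u v : Y.V) (l : List Y.D), Y.WalkFrom u v l → wordG (Y.wordOf l) = 1 → u = v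

/-- **P3**: every 2-cell is glued along a closed walk reading the relator
`[a₁,b₁]⋯[a_g,b_g]`, and every such closed walk bounds at most one 2-cell. -/
def P3 : Prop :=
  (∀ f : Y.F, (∃ v, Y.WalkFrom v v (Y.bdry f)) ∧ Y.wordOf (Y.bdry f) = relatorWord g) ∧
  Function.Injective Y.bdry

/-- A combinatorial covering space of `Σ_g`: every vertex has exactly one outgoing
and one incoming edge of each label, every walk reading the relator is closed, and
every closed walk reading the relator bounds exactly one `4g`-gon. -/
def IsCovering : Prop :=
  Y.P1 ∧ Y.P3 ∧
  (∀ (v : Y.V) (ℓ : Fin (2 * g)), ∃ e, Y.src e = v ∧ Y.lab e = ℓ) ∧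
  (∀ (v : Y.V) (ℓ : Fin (2 * g)), ∃ e, Y.dst e = v ∧ Y.lab e = ℓ) ∧
  (∀ (u v : Y.V) (l : List Y.D), Y.WalkFrom u v l → Y.wordOf l = relatorWord g → u = v) ∧
  (∀ (v : Y.V) (l : List Y.D), Y.WalkFrom v v l → Y.wordOf l = relatorWord g →
    ∃ f, Y.bdry f = l)

end Complex

/-- A morphism of labeled complexes: maps cells to cells of the same dimension and
respects sources, targets, labels and face boundaries (equivalently, commutes with
the immersions to `Σ_g`). -/
structure Hom {g : ℕ} (Y Z : Complex g) where
  mV : Y.V → Z.V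
  mE : Y.E → Z.E
  mF : Y.F → Z.F
  hsrc : ∀ e, Z.src (mE e) = mV (Y.src e)
  hdst : ∀ e, Z.dst (mE e) = mV (Y.dst e)
  hlab : ∀ e, Z.lab (mE e) = Y.lab e
  hbdry : ∀ f, Z.bdry (mF f) = (Y.bdry f).map fun d => (mE d.1, d.2)

namespace Hom

variable {g : ℕ} {Y Z : Complex g}

/-- The induced map on darts. -/
def mD (φ : Hom Y Z) (d : Y.D) : Z.D := (φ.mE d.1, d.2)

/-- Injectivity (an embedding of complexes). -/
def Inj (φ : Hom Y Z) : Prop :=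
  Function.Injective φ.mV ∧ Function.Injective φ.mE ∧ Function.Injective φ.mF

end Hom

namespace Complex

variable {g : ℕ} (Y : Complex g)

/-- A tiled surface: a complex which embeds into a combinatorial covering space of
`Σ_g` (compatibly with directions and labels). -/
def IsTiledSurface : Prop :=
  ∃ Z : Complex g, Z.IsCovering ∧ ∃ φ : Hom Y Z, φ.Inj

/-- Connectivity of a complex (any two vertices are joined by a walk). -/
def Connected : Prop := Nonempty Y.V ∧ ∀ v w : Y.V, ∃ l, Y.WalkFrom v w l

/-! ### Blocks and chains -/

/-- A block: a nonempty walk such that successive darts have no half-edges between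
them (hence it reads a subword of the cyclic relator, of length at most `4g`). -/
def IsBlock (l : List Y.D) : Prop :=
  l ≠ [] ∧ l.length ≤ 4 * g ∧
  List.Chain' (fun d d' => Y.adj d d' ∧ gapN (Y.dLet d) (Y.dLet d') = 0) l

/-- Two blocks are consecutive: concatenation is a walk and there is exactly one
half-edge between the last dart of the first and the first dart of the second. -/
def chainStep (b b' : List Y.D) : Prop :=
  ∃ d d', b.getLast? = some d ∧ b'.head? = some d' ∧ Y.adj d d' ∧
    gapN (Y.dLet d) (Y.dLet d') = 1

/-- A chain: a nonempty sequence of consecutive blocks. -/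
def IsChain (bs : List (List Y.D)) : Prop :=
  bs ≠ [] ∧ (∀ b ∈ bs, Y.IsBlock b) ∧ List.Chain' Y.chainStep bs

/-- A cyclic chain: a chain whose blocks pave an entire cycle. -/
def IsCyclicChain (bs : List (List Y.D)) : Prop :=
  Y.IsChain bs ∧ ∃ b b', bs.getLast? = some b ∧ bs.head? = some b' ∧ Y.chainStep b b'

/-- A long chain: a chain of consecutive blocks of lengths `2g, 2g−1, …, 2g−1, 2g`. -/
def IsLongChain (bs : List (List Y.D)) : Prop :=
  Y.IsChain bs ∧ ∃ k, bs.map List.length = 2 * g :: (List.replicate k (2 * g - 1) ++ [2 * g])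

/-- A half-chain: a cyclic chain all of whose blocks have length `2g − 1`. -/
def IsHalfChain (bs : List (List Y.D)) : Prop :=
  Y.IsCyclicChain bs ∧ ∀ b ∈ bs, b.length = 2 * g - 1

/-! ### Boundary cycles of the thick version (relative to sets of present edges and
faces), via the ribbon structure -/

/-- `nextD sE d d'`: among darts (with edge in `sE`) leaving the head of `d`, the
dart `d'` is the first one in clockwise order after the arrival half-edge of `d`.
This is the successor map whose orbits trace the boundary components of the thick
version of the ribbon graph. -/
def nextD (sE : Set Y.E) (d d' : Y.D) : Prop :=
  d'.1 ∈ sE ∧ Y.adj d d' ∧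
  ∀ d'' : Y.D, d''.1 ∈ sE → Y.adj d d'' →
    gapN (Y.dLet d) (Y.dLet d') ≤ gapN (Y.dLet d) (Y.dLet d'')

/-- The corner between the consecutive darts `d, d'` is filled by a face from `sF`. -/
def faceStep (sF : Set Y.F) (d d' : Y.D) : Prop :=
  ∃ f ∈ sF, [d, d'] <:+: (Y.bdry f ++ Y.bdry f)

/-- One step along the boundary of the thick version. -/
def bStep (sE : Set Y.E) (sF : Set Y.F) (d d' : Y.D) : Prop :=
  d.1 ∈ sE ∧ Y.nextD sE d d' ∧ ¬ Y.faceStep sF d d'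

/-- A (finite segment of a) boundary cycle of the thick version. -/
def BPath (sE : Set Y.E) (sF : Set Y.F) (l : List Y.D) : Prop :=
  l ≠ [] ∧ Y.InSet sE l ∧ List.Chain' (Y.bStep sE sF) l

/-- A (finite) boundary cycle of the thick version. -/
def BCycle (sE : Set Y.E) (sF : Set Y.F) (l : List Y.D) : Prop :=
  Y.BPath sE sF l ∧ ∃ d d', l.getLast? = some d ∧ l.head? = some d' ∧ Y.bStep sE sF d d'

/-- A dart lying on the boundary of the thick version. -/
def IsBDart (sE : Set Y.E) (sF : Set Y.F) (d : Y.D) : Prop :=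
  d.1 ∈ sE ∧ ∃ d', Y.nextD sE d d' ∧ ¬ Y.faceStep sF d d'

/-- Boundary reduced: no boundary cycle contains a long block (length `≥ 2g+1`) or
a long chain. -/
def BoundaryReduced (sE : Set Y.E) (sF : Set Y.F) : Prop :=
  (∀ l, Y.BPath sE sF l → ¬ (Y.IsBlock l ∧ 2 * g + 1 ≤ l.length)) ∧
  (∀ bs, Y.IsLongChain bs → ¬ Y.BPath sE sF bs.flatten)

/-- Strongly boundary reduced: no boundary cycle contains a half-block (length
exactly `2g`) or a half-chain. -/
def StronglyBoundaryReduced (sE : Set Y.E) (sF : Set Y.F) : Prop :=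
  (∀ l, Y.BPath sE sF l → ¬ (Y.IsBlock l ∧ l.length = 2 * g)) ∧
  (∀ bs, Y.IsHalfChain bs → ¬ Y.BCycle sE sF bs.flatten)

/-! ### Combinatorial homotopy of walks -/

/-- A closed walk traversing the boundary of a face from `sF` (in either direction,
starting anywhere). -/
def faceLoop (sF : Set Y.F) (b : List Y.D) : Prop :=
  ∃ f ∈ sF, ∃ n, b = (Y.bdry f).rotate n ∨ b = Y.revW ((Y.bdry f).rotate n)

/-- Elementary homotopy move: insertion of a backtrack or of a face boundary. -/
def elemMove (sE : Set Y.E) (sF : Set Y.F) (l l' : List Y.D) : Prop :=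
  (∃ (l₁ l₂ : List Y.D) (d : Y.D), d.1 ∈ sE ∧ l = l₁ ++ l₂ ∧ l' = l₁ ++ d :: Y.dRev d :: l₂) ∨
  (∃ l₁ l₂ b, Y.faceLoop sF b ∧ l = l₁ ++ l₂ ∧ l' = l₁ ++ b ++ l₂)

/-- Homotopy (rel endpoints) of walks from `u` to `v`, inside the subcomplex with
edge set `sE` and face set `sF`. -/
def Homotopic (sE : Set Y.E) (sF : Set Y.F) (u v : Y.V) (c c' : List Y.D) : Prop :=
  Relation.EqvGen
    (fun a b =>
      Y.WalkFrom u v a ∧ Y.WalkFrom u v b ∧ Y.InSet sE a ∧ Y.InSet sE b ∧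
        (Y.elemMove sE sF a b ∨ Y.elemMove sE sF b a)) c c'

/-- A closed walk which is null-homotopic. -/
def NullHomotopic (sE : Set Y.E) (sF : Set Y.F) (c : List Y.D) : Prop :=
  ∃ v, Y.WalkFrom v v c ∧ Y.Homotopic sE sF v v c []

/-- An essential cycle: a nonempty closed walk which is not null-homotopic. -/
def Essential (sE : Set Y.E) (sF : Set Y.F) (c : List Y.D) : Prop :=
  Y.IsCycle c ∧ Y.InSet sE c ∧ ¬ Y.NullHomotopic sE sF c

/-- Free homotopy of closed walks. -/
def FreelyHomotopic (sE : Set Y.E) (sF : Set Y.F) (c c' : List Y.D) : Prop :=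
  ∃ u v q, Y.WalkFrom u u c ∧ Y.WalkFrom v v c' ∧ Y.WalkFrom u v q ∧
    Y.InSet sE q ∧ Y.InSet sE c ∧ Y.InSet sE c' ∧
    Y.Homotopic sE sF u u c (q ++ c' ++ Y.revW q)

/-- `c` is a shortest representative of its free homotopy class. -/
def ShortestRep (sE : Set Y.E) (sF : Set Y.F) (c : List Y.D) : Prop :=
  ∀ c', Y.FreelyHomotopic sE sF c c' → c.length ≤ c'.length

end Complex

/-- `s` occurs as a contiguous subword of the cyclic word `c`. -/
def cycContains {α : Type*} (c s : List α) : Prop :=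
  s ≠ [] ∧ s.length ≤ c.length ∧ s <:+: (c ++ c)

namespace Complex

variable {g : ℕ} (Y : Complex g)

/-- The cycle `c` contains no long block and no long chain. -/
def NoLongBlockOrChainCyc (c : List Y.D) : Prop :=
  (∀ s, cycContains c s → ¬ (Y.IsBlock s ∧ 2 * g + 1 ≤ s.length)) ∧
  (∀ bs, Y.IsLongChain bs → ¬ cycContains c bs.flatten)

/-- A (cyclically) non-backtracking cycle. -/
def NonBacktrackingCyc (c : List Y.D) : Prop :=
  ¬ ∃ d : Y.D, cycContains c [d, Y.dRev d]

/-- A cycle which is essential and a shortest representative of its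
free homotopy class. -/
def GoodCycle (c : List Y.D) : Prop :=
  Y.IsCycle c ∧ Y.Essential Set.univ Set.univ c ∧ Y.ShortestRep Set.univ Set.univ c

/-! ### Cells and components of complements -/

/-- The cells of a complex. -/
def Cell := Y.V ⊕ Y.E ⊕ Y.F

def vCell (v : Y.V) : Y.Cell := Sum.inl v
def eCell (e : Y.E) : Y.Cell := Sum.inr (Sum.inl e)
def fCell (f : Y.F) : Y.Cell := Sum.inr (Sum.inr f)

/-- Basic incidence of (open) cells. -/
def inc0 : Y.Cell → Y.Cell → Prop := fun c c' =>
  match c, c' with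
  | Sum.inl v, Sum.inr (Sum.inl e) => Y.src e = v ∨ Y.dst e = v
  | Sum.inl v, Sum.inr (Sum.inr f) => ∃ d ∈ Y.bdry f, Y.dTail d = v
  | Sum.inr (Sum.inl e), Sum.inr (Sum.inr f) => ∃ b, (e, b) ∈ Y.bdry f
  | _, _ => False

/-- Symmetrized incidence of cells. -/
def incid (c c' : Y.Cell) : Prop := Y.inc0 c c' ∨ Y.inc0 c' c

end Complex

/-- A triple of subsets of the cells of a complex `Y` (a prospective subcomplex). -/
structure SubC {g : ℕ} (Y : Complex g) where
  sV : Set Y.V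
  sE : Set Y.E
  sF : Set Y.F

namespace SubC

variable {g : ℕ} {Y : Complex g}

/-- `S` is an actual subcomplex: closed under taking boundaries of cells. -/
def IsSub (S : SubC Y) : Prop :=
  (∀ e ∈ S.sE, Y.src e ∈ S.sV ∧ Y.dst e ∈ S.sV) ∧
  (∀ f ∈ S.sF, ∀ d ∈ Y.bdry f, d.1 ∈ S.sE)

/-- Containment of subcomplexes. -/
def le (S T : SubC Y) : Prop := S.sV ⊆ T.sV ∧ S.sE ⊆ T.sE ∧ S.sF ⊆ T.sF

/-- Compactness: finitely many cells. -/
def Compact (S : SubC Y) : Prop := S.sV.Finite ∧ S.sE.Finite ∧ S.sF.Finite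

/-- Connectivity of the subcomplex. -/
def Connected (S : SubC Y) : Prop :=
  S.sV.Nonempty ∧ ∀ v ∈ S.sV, ∀ w ∈ S.sV, ∃ l, Y.WalkFrom v w l ∧ Y.InSet S.sE l

/-- Image of a subcomplex under a morphism. -/
def image {Z : Complex g} (φ : Hom Y Z) (S : SubC Y) : SubC Z :=
  ⟨φ.mV '' S.sV, φ.mE '' S.sE, φ.mF '' S.sF⟩

end SubC

/-- The whole complex, as a subcomplex of itself. -/
def fullSub {g : ℕ} (Y : Complex g) : SubC Y := ⟨Set.univ, Set.univ, Set.univ⟩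

namespace Complex

variable {g : ℕ} (Y : Complex g)

/-- Membership of a cell in a subcomplex. -/
def inSub (S : SubC Y) : Y.Cell → Prop := fun c =>
  match c with
  | Sum.inl v => v ∈ S.sV
  | Sum.inr (Sum.inl e) => e ∈ S.sE
  | Sum.inr (Sum.inr f) => f ∈ S.sF

/-- Reachability of cells through the open complement of the subcomplex `S`
(= lying in the same connected component of the complement). -/
def reachS (S : SubC Y) (c c' : Y.Cell) : Prop :=
  Relation.ReflTransGen (fun a b => Y.incid a b ∧ ¬ Y.inSub S a ∧ ¬ Y.inSub S b) c c'

end Complex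

/-- The closure (as a subcomplex) of the connected component of the cell `c₀` in the
complement of the subcomplex `S`. -/
def compCl {g : ℕ} (Y : Complex g) (S : SubC Y) (c₀ : Y.Cell) : SubC Y :=
  let cF : Set Y.F := {f | Y.reachS S c₀ (Y.fCell f)}
  let cE : Set Y.E :=
    {e | Y.reachS S c₀ (Y.eCell e)} ∪ {e | ∃ f ∈ cF, ∃ b, (e, b) ∈ Y.bdry f}
  let cV : Set Y.V :=
    {v | Y.reachS S c₀ (Y.vCell v)} ∪ {v | ∃ e ∈ cE, Y.src e = v ∨ Y.dst e = v}
  ⟨cV, cE, cF⟩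

/-- The subcomplex has exactly one boundary cycle (which covers all boundary darts). -/
def OneBdry {g : ℕ} (Y : Complex g) (S : SubC Y) : Prop :=
  ∃ δ, Y.BCycle S.sE S.sF δ ∧ ∀ d, Y.IsBDart S.sE S.sF d → d ∈ δ

/-- The subcomplex has exactly two (disjoint) boundary cycles, covering all
boundary darts. -/
def TwoBdry {g : ℕ} (Y : Complex g) (S : SubC Y) : Prop :=
  ∃ δ₁ δ₂, Y.BCycle S.sE S.sF δ₁ ∧ Y.BCycle S.sE S.sF δ₂ ∧ δ₁.Disjoint δ₂ ∧
    ∀ d, Y.IsBDart S.sE S.sF d → d ∈ δ₁ ∨ d ∈ δ₂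

/-- The boundary-reduced closure of `S` inside `Y`: the intersection of all
intermediate boundary reduced subcomplexes. -/
def BRcl {g : ℕ} (Y : Complex g) (S : SubC Y) : SubC Y where
  sV := ⋂ T ∈ {T : SubC Y | T.IsSub ∧ S.le T ∧ Y.BoundaryReduced T.sE T.sF}, T.sV
  sE := ⋂ T ∈ {T : SubC Y | T.IsSub ∧ S.le T ∧ Y.BoundaryReduced T.sE T.sF}, T.sE
  sF := ⋂ T ∈ {T : SubC Y | T.IsSub ∧ S.le T ∧ Y.BoundaryReduced T.sE T.sF}, T.sF

/-- The strongly-boundary-reduced closure of `S` inside `Y`. -/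
def SBRcl {g : ℕ} (Y : Complex g) (S : SubC Y) : SubC Y where
  sV := ⋂ T ∈ {T : SubC Y | T.IsSub ∧ S.le T ∧ Y.StronglyBoundaryReduced T.sE T.sF}, T.sV
  sE := ⋂ T ∈ {T : SubC Y | T.IsSub ∧ S.le T ∧ Y.StronglyBoundaryReduced T.sE T.sF}, T.sE
  sF := ⋂ T ∈ {T : SubC Y | T.IsSub ∧ S.le T ∧ Y.StronglyBoundaryReduced T.sE T.sF}, T.sF

/-- An isomorphism between the subcomplex `S` of `Y` and the subcomplex `T` of `Z`. -/
structure SubEquiv {g : ℕ} (Y : Complex g) (S : SubC Y) (Z : Complex g) (T : SubC Z) where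
  fV : Y.V → Z.V
  fE : Y.E → Z.E
  fF : Y.F → Z.F
  bijV : Set.BijOn fV S.sV T.sV
  bijE : Set.BijOn fE S.sE T.sE
  bijF : Set.BijOn fF S.sF T.sF
  hsrc : ∀ e ∈ S.sE, Z.src (fE e) = fV (Y.src e)
  hdst : ∀ e ∈ S.sE, Z.dst (fE e) = fV (Y.dst e)
  hlab : ∀ e ∈ S.sE, Z.lab (fE e) = Y.lab e
  hbdry : ∀ f ∈ S.sF, Z.bdry (fF f) = (Y.bdry f).map fun d => (fE d.1, d.2)

/-- `FunnelComponent Y S c₀`: the connected component of the cell `c₀` in the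
complement of the subcomplex `S` is a twice-punctured sphere with one funnel and
one fake-puncture.  Rendered combinatorially: the component contains infinitely
many `4g`-gons (the funnel); there is a boundary cycle `δ` of `S` adjacent to the
component, it is unique (one fake-puncture), and every closed walk inside the
closure of the component is freely homotopic there to a power of `δ` or of its
inverse (so the closure is a half-open annulus bounded by `δ`). -/
def FunnelComponent {g : ℕ} (Y : Complex g) (S : SubC Y) (c₀ : Y.Cell) : Prop :=
  {f : Y.F | Y.reachS S c₀ (Y.fCell f)}.Infinite ∧
  ∃ δ : List Y.D, Y.BCycle S.sE S.sF δ ∧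
    (∃ d ∈ δ, ∃ c', Y.incid (Y.eCell d.1) c' ∧ Y.reachS S c₀ c') ∧
    (∀ δ', Y.BCycle S.sE S.sF δ' →
      (∃ d ∈ δ', ∃ c', Y.incid (Y.eCell d.1) c' ∧ Y.reachS S c₀ c') →
      ∃ n, δ' = δ.rotate n) ∧
    (∀ (v : Y.V) (l : List Y.D), Y.WalkFrom v v l →
      Y.InSet ({e | Y.reachS S c₀ (Y.eCell e)} ∪ {e | ∃ b, (e, b) ∈ δ}) l →
      ∃ n,
        Y.FreelyHomotopic ({e | Y.reachS S c₀ (Y.eCell e)} ∪ {e | ∃ b, (e, b) ∈ δ})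
          {f | Y.reachS S c₀ (Y.fCell f)} l ((List.replicate n δ).flatten) ∨
        Y.FreelyHomotopic ({e | Y.reachS S c₀ (Y.eCell e)} ∪ {e | ∃ b, (e, b) ∈ δ})
          {f | Y.reachS S c₀ (Y.fCell f)} l ((List.replicate n (Y.revW δ)).flatten))

/-- `Y` contains a funnel: an essential cycle `δ` of `Y` cutting off an infinite
region of `Y` which is attached to the rest of `Y` only along `δ`, contains no
boundary of `Y`, and is a half-open annulus (every loop inside is freely homotopic
to a power of `δ`); i.e. an end of `Y` which is a puncture of the ambient covering. -/
def HasFunnel {g : ℕ} (Y : Complex g) : Prop :=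
  ∃ (δ : List Y.D) (sE : Set Y.E) (sF : Set Y.F),
    Y.IsCycle δ ∧ Y.Essential Set.univ Set.univ δ ∧
    (∀ d ∈ δ, d.1 ∉ sE) ∧ sE.Nonempty ∧ sF.Infinite ∧
    (∀ f ∈ sF, ∀ d ∈ Y.bdry f, d.1 ∈ sE ∨ ∃ b, (d.1, b) ∈ δ) ∧
    (∀ f : Y.F, (∃ d ∈ Y.bdry f, d.1 ∈ sE) → f ∈ sF) ∧
    (∀ d : Y.D, d.1 ∈ sE → ¬ Y.IsBDart Set.univ Set.univ d) ∧
    (∀ v : Y.V, (∃ e ∈ sE, Y.src e = v ∨ Y.dst e = v) → (∀ d ∈ δ, Y.dTail d ≠ v) →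
      ∀ e' : Y.E, (Y.src e' = v ∨ Y.dst e' = v) → e' ∈ sE) ∧
    (∀ (v : Y.V) (l : List Y.D), Y.WalkFrom v v l →
      Y.InSet (sE ∪ {e | ∃ b, (e, b) ∈ δ}) l →
      ∃ n,
        Y.FreelyHomotopic (sE ∪ {e | ∃ b, (e, b) ∈ δ}) sF l
          ((List.replicate n δ).flatten) ∨
        Y.FreelyHomotopic (sE ∪ {e | ∃ b, (e, b) ∈ δ}) sF l
          ((List.replicate n (Y.revW δ)).flatten))

/-- The fundamental group of `Y` is cyclic: some closed walk `c` generates all free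
homotopy classes of loops.  (For a connected surface this is *equivalent to NOT
having genus ≥ 1 or at least 3 boundary components/punctures*.) -/
def CyclicPi1 {g : ℕ} (Y : Complex g) : Prop :=
  ∃ c : List Y.D, ∀ (v : Y.V) (l : List Y.D), Y.WalkFrom v v l →
    ∃ n,
      Y.FreelyHomotopic Set.univ Set.univ l ((List.replicate n c).flatten) ∨
      Y.FreelyHomotopic Set.univ Set.univ l ((List.replicate n (Y.revW c)).flatten)

/-! ### The covering space `J\~Σ_g` and the core surface of `J` -/

/-- Right cosets `Jx` of `J` in `Γ_g` — the vertices (and faces) of `J\~Σ_g`. -/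
abbrev Cos (g : ℕ) (J : Subgroup (Gamma g)) := Quotient (QuotientGroup.rightRel J)

/-- The coset `Jx`. -/
def mkCos (g : ℕ) (J : Subgroup (Gamma g)) (x : Gamma g) : Cos g J :=
  Quotient.mk _ x

/-- Right multiplication on right cosets. -/
def rmul (g : ℕ) (J : Subgroup (Gamma g)) (x : Gamma g) : Cos g J → Cos g J :=
  Quotient.map (· * x) (by
    intro a b hab
    have h1 : b * a⁻¹ ∈ J := QuotientGroup.rightRel_apply.mp hab
    refine QuotientGroup.rightRel_apply.mpr ?_
    have h2 : b * x * (a * x)⁻¹ = b * a⁻¹ := by group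
    rw [h2]; exact h1)

/-- The walk in `J\~Σ_g` starting at a vertex and reading a given word. -/
def relWalk (g : ℕ) (J : Subgroup (Gamma g)) :
    Cos g J → List (Letter g) → List ((Cos g J × Fin (2 * g)) × Bool)
  | _, [] => []
  | v, (ℓ, true) :: w =>
      ((v, ℓ), true) :: relWalk g J (rmul g J (PresentedGroup.of ℓ) v) w
  | v, (ℓ, false) :: w =>
      ((rmul g J (PresentedGroup.of ℓ)⁻¹ v, ℓ), false) ::
        relWalk g J (rmul g J (PresentedGroup.of ℓ)⁻¹ v) w

/-- The covering space `Υ = J\~Σ_g` of `Σ_g` corresponding to the subgroup `J`,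
with the CW-structure pulled back from `Σ_g`: vertices and `4g`-gons are the right
cosets of `J`, and each vertex carries one outgoing edge per label. -/
def cover (g : ℕ) (J : Subgroup (Gamma g)) : Complex g where
  V := Cos g J
  E := Cos g J × Fin (2 * g)
  F := Cos g J
  src e := e.1
  dst e := rmul g J (PresentedGroup.of e.2) e.1
  lab e := e.2
  bdry v := relWalk g J v (relatorWord g)

/-- The map `J₁\~Σ_g → J₂\~Σ_g` on vertices, for `J₁ ≤ J₂`. -/
def coverMapV {g : ℕ} {J₁ J₂ : Subgroup (Gamma g)} (h : J₁ ≤ J₂) :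
    Cos g J₁ → Cos g J₂ :=
  Quotient.map id (by
    intro a b hab
    have h1 : b * a⁻¹ ∈ J₁ := QuotientGroup.rightRel_apply.mp hab
    exact QuotientGroup.rightRel_apply.mpr (h h1))

/-- The natural covering morphism on edges. -/
def coverMapE {g : ℕ} {J₁ J₂ : Subgroup (Gamma g)} (h : J₁ ≤ J₂)
    (e : (cover g J₁).E) : (cover g J₂).E :=
  (coverMapV h e.1, e.2)

/-- The natural covering morphism on darts. -/
def coverMapD {g : ℕ} {J₁ J₂ : Subgroup (Gamma g)} (h : J₁ ≤ J₂)
    (d : (cover g J₁).D) : (cover g J₂).D :=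
  (coverMapE h d.1, d.2)

/-- The cycle `c` in `J\~Σ_g` represents the conjugacy class of `γ` in `J`
(conjugacy classes in `J` ↔ free homotopy classes of essential loops in `J\~Σ_g`). -/
def RepCls {g : ℕ} (J : Subgroup (Gamma g)) (c : List ((cover g J).D))
    (γ : Gamma g) : Prop :=
  ∃ x j : Gamma g, j ∈ J ∧
    (cover g J).WalkFrom (mkCos g J x) (mkCos g J x) c ∧
    x * wordG ((cover g J).wordOf c) * x⁻¹ = j * γ * j⁻¹

/-- Step (i) of the definition of the core surface: the edges lying on some
shortest representative cycle of an essential free homotopy class. -/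
def coreE1 (g : ℕ) (J : Subgroup (Gamma g)) : Set (cover g J).E :=
  {e | ∃ c, (cover g J).GoodCycle c ∧ ∃ b, (e, b) ∈ c}

/-- The vertices of step (i) of the definition of the core surface. -/
def coreV1 (g : ℕ) (J : Subgroup (Gamma g)) : Set (cover g J).V :=
  {v | ∃ e ∈ coreE1 g J, (cover g J).src e = v ∨ (cover g J).dst e = v}

/-- Step (i) of the definition of the core surface, as a subcomplex of `J\~Σ_g`. -/
def coreS1 (g : ℕ) (J : Subgroup (Gamma g)) : SubC (cover g J) :=
  ⟨coreV1 g J, coreE1 g J, ∅⟩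

/-- A cell of `J\~Σ_g` lying in a connected component of the complement of step (i)
which contains only finitely many `4g`-gons. -/
def coreFin (g : ℕ) (J : Subgroup (Gamma g)) (c : (cover g J).Cell) : Prop :=
  ¬ (cover g J).inSub (coreS1 g J) c ∧
  {f : (cover g J).F | (cover g J).reachS (coreS1 g J) c ((cover g J).fCell f)}.Finite

open Classical in
/-- The core surface `Core(J)` of a subgroup `J ≤ Γ_g`, as a subcomplex of
`Υ = J\~Σ_g`: (i) the union of all shortest representative cycles of essential
free homotopy classes in `Υ`, together with (ii) all connected components of the
complement containing finitely many `4g`-gons.  For the trivial subgroup it is a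
single vertex. -/
def coreSub (g : ℕ) (J : Subgroup (Gamma g)) : SubC (cover g J) :=
  if J = ⊥ then ⟨{mkCos g J 1}, ∅, ∅⟩
  else
    ⟨coreV1 g J ∪ {v | coreFin g J ((cover g J).vCell v)},
     coreE1 g J ∪ {e | coreFin g J ((cover g J).eCell e)},
     {f | coreFin g J ((cover g J).fCell f)}⟩

/-!
The morphism `Y → Z` preserves labels and homotopies preserve the element of `Γ_g` that a walk
reads, so it is enough that a closed walk in `Y` reading the identity of `Γ_g` is null-homotopic
in `Y`. This is Dehn's algorithm, carried out inside `Y`.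

First, a nonempty reduced word representing the identity contains all but three consecutive
letters of a cyclic conjugate of the relator or of its inverse. To see this, the tessellation of
the hyperbolic plane by `4g`-gons is built combinatorially in layers around a root, together with
an action of `Γ_g` on its vertices in the spirit of van der Waerden's proof of the normal form
theorem for free products. A reduced path from the root which never follows a face along all but
three of its sides cannot return to an earlier layer: having entered a layer at one end of a face,
it would have to follow that face to its other end to find a way down.

Secondly, if a walk in `Y` reads all but three sides of a `4g`-gon, then that `4g`-gon belongs to
`Y`, for otherwise the walk would contain a long block on the boundary. So the walk can be replaced
by the other three sides, and the closed walk gets shorter.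
-/

section ListLemmas

variable {α : Type*} {R R' : α → α → Prop} {s w : List α} {m n : ℕ}

theorem iterate_prefix_iterate (f : α → α) (a : α) (h : m ≤ n) :
    List.iterate f a m <+: List.iterate f a n := by
  rw [← Nat.add_sub_cancel' h, List.iterate_add]
  exact List.prefix_append _ _

theorem suffix_append_singleton (a : α) (h : s <:+ w) : s ++ [a] <:+ w ++ [a] := by
  obtain ⟨t, rfl⟩ := h
  exact ⟨t, (List.append_assoc t s [a]).symm⟩

theorem mem_getLast?_of_suffix {a : α} (h : s ++ [a] <:+ w) : a ∈ w.getLast? :=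
  List.singleton_suffix_iff_getLast?_eq_some.1 ((List.suffix_append s [a]).trans h)

theorem iterate_succ_eq_append (f : α → α) (a : α) (n : ℕ) :
    List.iterate f a (n + 1) = List.iterate f a n ++ [f^[n] a] := by
  rw [List.iterate_add]
  rfl

theorem isChain_iterate (f : α → α) (a : α) (n : ℕ) :
    (List.iterate f a n).IsChain fun x y => y = f x := by
  simp only [List.isChain_iff_getElem, List.getElem_iterate, Function.iterate_succ_apply',
    implies_true]

theorem isChain_and (h : w.IsChain R) (h' : w.IsChain R') :
    w.IsChain fun x y => R x y ∧ R' x y := by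
  rw [List.isChain_iff_getElem] at *
  exact fun i hi => ⟨h i hi, h' i hi⟩

theorem prefix_of_isChain (hR : Relator.RightUnique R) {a : α} (hs : (a :: s).IsChain R)
    (hw : (a :: w).IsChain R) (hlen : s.length ≤ w.length) : s <+: w := by
  induction s generalizing w a with
  | nil => exact List.nil_prefix
  | cons b s ih =>
    obtain _ | ⟨c, w⟩ := w
    · exact absurd hlen (Nat.not_succ_le_zero _)
    · rw [List.isChain_cons_cons] at hs hw
      obtain rfl := hR hs.1 hw.1
      exact (List.prefix_cons_inj b).2 (ih hs.2 hw.2 (Nat.le_of_succ_le_succ hlen))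

theorem exists_append_of_infix_map {β : Type*} {f : β → α} {l : List β} (h : s <:+: l.map f) :
    ∃ x t y, l = x ++ t ++ y ∧ t.map f = s := by
  obtain ⟨x', y', hxy⟩ := h
  obtain ⟨xt, y, rfl, hxt, -⟩ := List.map_eq_append_iff.1 hxy.symm
  obtain ⟨x, t, rfl, -, ht⟩ := List.map_eq_append_iff.1 hxt
  exact ⟨x, t, y, rfl, ht⟩

end ListLemmas

/-- A combinatorial model of a tessellation in which every vertex looks the same: `P` is the set of
directions leaving a vertex, walking off along `p` one may come back along `rev p`, and the face to
the left of `p` is followed by leaving the far end of `p` along `next p`. Every face has `faceLen`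
sides, so the faces have at least four sides, and at least four of them meet at every vertex. -/
structure TilingSystem (P : Type*) where
  next : Equiv.Perm P
  rev : P → P
  faceLen : ℕ
  four_le_faceLen : 4 ≤ faceLen
  rev_rev : ∀ p, rev (rev p) = p
  next_iterate_faceLen : ∀ p, next^[faceLen] p = p
  next_rev_iterate_ne : ∀ p j, 0 < j → j < 4 → (next ∘ rev)^[j] p ≠ p

/-- The vertices of the tessellation, named by the way they are discovered when it is built in
layers around a root: `node u q k` is the `(k + 1)`-st vertex after `u` on the face to the left of
the direction `q` at `u`. Only the names satisfying `TilingSystem.Valid` are used. -/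
inductive LayeredVertex (P : Type*) where
  | root : LayeredVertex P
  | node (u : LayeredVertex P) (q : P) (k : ℕ) : LayeredVertex P

namespace TilingSystem

open LayeredVertex Function

variable {P : Type*} (S : TilingSystem P)

/-- The direction following `p` in the cyclic order around a vertex: the face to the left of
`rev p` is continued along `rot p`. -/
def rot : Equiv.Perm P where
  toFun p := S.next (S.rev p)
  invFun p := S.rev (S.next.symm p)
  left_inv p := by simp [S.rev_rev]
  right_inv p := by simp [S.rev_rev]

theorem rot_rev (p : P) : S.rot (S.rev p) = S.next p :=
  congrArg S.next (S.rev_rev p)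

theorem rev_rot_symm (p : P) : S.rev (S.rot.symm p) = S.next.symm p :=
  S.rev_rev _

theorem rot_ne (p : P) : S.rot p ≠ p :=
  S.next_rev_iterate_ne p 1 (by decide) (by decide)

theorem rot_rot_ne (p : P) : S.rot (S.rot p) ≠ p :=
  S.next_rev_iterate_ne p 2 (by decide) (by decide)

theorem rot_rot_rot_ne (p : P) : S.rot (S.rot (S.rot p)) ≠ p :=
  S.next_rev_iterate_ne p 3 (by decide) (by decide)

theorem next_iterate_faceLen_sub {j : ℕ} (hj : j ≤ S.faceLen) (p : P) :
    S.next^[S.faceLen - j] p = S.next.symm^[j] p := by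
  apply (S.next.injective.iterate j)
  rw [← iterate_add_apply, Nat.add_sub_cancel' hj, S.next_iterate_faceLen]
  exact ((S.next.right_inv.iterate j) p).symm

/-- The direction leading to the right neighbour of a vertex in its own layer (none at the root). -/
def rightLetter : LayeredVertex P → Option P
  | root => none
  | node _ q k => some (S.next^[k + 1] q)

/-- The direction leading to the left neighbour of a vertex in its own layer (none at the root). -/
def leftLetter : LayeredVertex P → Option P
  | root => none
  | node _ q 0 => some (S.rot.symm (S.rev q))
  | node _ q (k + 1) => some (S.rev (S.next^[k + 1] q))

/-- The direction leading to the previous layer; only the vertices `node u q 0` have one. -/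
def downLetter : LayeredVertex P → Option P
  | node _ q 0 => some (S.rev q)
  | _ => none

/-- The direction `p` at `v` leads to the next layer. -/
def Ascends (v : LayeredVertex P) (p : P) : Prop :=
  S.rightLetter v ≠ some p ∧ S.leftLetter v ≠ some p ∧ S.downLetter v ≠ some p

/-- The face to the left of the direction `q` at `u` is the one shared with the right neighbour of
`u`. -/
def IsRightmost (u : LayeredVertex P) (q : P) : Prop :=
  S.rightLetter u = some (S.rot.symm q)

/-- `q` is the ascending direction at `u` next to the left neighbour of `u`. -/
def IsLeftmost (u : LayeredVertex P) (q : P) : Prop :=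
  S.leftLetter u = some (S.rot q)

open Classical in
/-- The largest `k` for which `node u q k` names a vertex: a face touching the previous layer in an
edge has one vertex less in the new layer than a face touching it in a single vertex. The last
vertex of the face, at the end of its last edge back to the previous layer, is named after the
neighbouring face. -/
def topIndex (u : LayeredVertex P) (q : P) : ℕ :=
  if S.IsRightmost u q then S.faceLen - 4 else S.faceLen - 3

open Classical in
/-- The right neighbour of a vertex in its own layer. -/
def right : LayeredVertex P → LayeredVertex P
  | root => root
  | node u q k =>
    if k < S.topIndex u q then node u q (k + 1)
    else if S.IsRightmost u q then node (right u) (S.rot.symm (S.next.symm q)) 0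
    else node u (S.rot.symm q) 0

open Classical in
/-- The left neighbour of a vertex in its own layer. -/
def left : LayeredVertex P → LayeredVertex P
  | root => root
  | node u q (k + 1) => node u q k
  | node u q 0 =>
    if S.IsLeftmost u q then node (left u) (S.next (S.rot q)) (S.faceLen - 4)
    else node u (S.rot q) (S.faceLen - 3)

/-- The names that denote vertices of the tessellation. -/
def Valid : LayeredVertex P → Prop
  | root => True
  | node u q k => Valid u ∧ S.Ascends u q ∧ k ≤ S.topIndex u q

/-- The vertex `u` of the face naming `node u q k`; for `k = 0` it is a neighbour. -/
def parent : LayeredVertex P → LayeredVertex P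
  | root => root
  | node u _ _ => u

open Classical in
/-- The vertex reached from `v` in the direction `p`. -/
def step (v : LayeredVertex P) (p : P) : LayeredVertex P :=
  if S.rightLetter v = some p then S.right v
  else if S.leftLetter v = some p then S.left v
  else if S.downLetter v = some p then parent v
  else node v p 0

variable {S}
variable {u v : LayeredVertex P} {p q : P} {k : ℕ}

theorem eq_root_or_exists_leftLetter (v : LayeredVertex P) : v = root ∨ ∃ l,
    S.leftLetter v = some l ∧
      (S.downLetter v = none ∧ S.rightLetter v = some (S.rot l) ∨
        S.downLetter v = some (S.rot l) ∧ S.rightLetter v = some (S.rot (S.rot l))) := by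
  match v with
  | root => exact Or.inl rfl
  | node u q 0 => exact Or.inr ⟨_, rfl, Or.inr (by simp [downLetter, rightLetter, rot_rev])⟩
  | node u q (k + 1) =>
    refine Or.inr ⟨_, rfl, Or.inl ⟨rfl, ?_⟩⟩
    rw [rot_rev, ← iterate_succ_apply' S.next]
    rfl

theorem leftLetter_ne_of_rightLetter (h : S.rightLetter v = some p) : S.leftLetter v ≠ some p := by
  rcases S.eq_root_or_exists_leftLetter v with rfl | ⟨l, hl, ⟨-, hr⟩ | ⟨-, hr⟩⟩
  · cases h
  · rw [hl, ← h, hr]; exact fun e => S.rot_ne l (Option.some.inj e).symm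
  · rw [hl, ← h, hr]; exact fun e => S.rot_rot_ne l (Option.some.inj e).symm

theorem Ascends.rot_symm (h : S.Ascends v p) (hr : ¬S.IsRightmost v p) :
    S.Ascends v (S.rot.symm p) := by
  rcases S.eq_root_or_exists_leftLetter v with rfl | ⟨l, hl, ⟨hd, hr'⟩ | ⟨hd, hr'⟩⟩ <;>
    simp_all [Ascends, IsRightmost, Equiv.eq_symm_apply, leftLetter, downLetter]

theorem Ascends.rot (h : S.Ascends v p) (hl : ¬S.IsLeftmost v p) : S.Ascends v (S.rot p) := by
  rcases S.eq_root_or_exists_leftLetter v with rfl | ⟨l, hl', ⟨hd, hr⟩ | ⟨hd, hr⟩⟩ <;>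
    simp_all [Ascends, IsLeftmost, rightLetter, downLetter]

theorem IsLeftmost.ascends (h : S.IsLeftmost v p) : S.Ascends v p := by
  have h1 := S.rot_ne p
  have h2 := S.rot_rot_ne p
  have h3 := S.rot_rot_rot_ne p
  rcases S.eq_root_or_exists_leftLetter v with rfl | ⟨l, hl, ⟨hd, hr⟩ | ⟨hd, hr⟩⟩ <;>
    simp_all [Ascends, IsLeftmost, leftLetter]

theorem isRightmost_rot_iff : S.IsRightmost v (S.rot p) ↔ S.rightLetter v = some p := by
  rw [IsRightmost, Equiv.symm_apply_apply]

theorem ascends_rot_of_rightLetter (h : S.rightLetter v = some p) : S.Ascends v (S.rot p) := by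
  rcases S.eq_root_or_exists_leftLetter v with rfl | ⟨l, hl, ⟨hd, hr⟩ | ⟨hd, hr⟩⟩
  · cases h
  all_goals
    obtain rfl := Option.some.inj (hr.symm.trans h)
    simp [Ascends, hl, hd, hr, (S.rot_ne _).symm, (S.rot_rot_ne _).symm,
      (S.rot_rot_rot_ne _).symm]

theorem Ascends.not_isLeftmost_rot_symm (h : S.Ascends v p) : ¬S.IsLeftmost v (S.rot.symm p) := by
  rw [IsLeftmost, Equiv.apply_symm_apply]
  exact h.2.1

theorem Ascends.not_isRightmost_rot (h : S.Ascends v p) : ¬S.IsRightmost v (S.rot p) :=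
  fun hr => h.1 (isRightmost_rot_iff.1 hr)

theorem topIndex_of_isRightmost (h : S.IsRightmost u q) : S.topIndex u q = S.faceLen - 4 :=
  if_pos h

theorem topIndex_of_not_isRightmost (h : ¬S.IsRightmost u q) :
    S.topIndex u q = S.faceLen - 3 :=
  if_neg h

theorem faceLen_sub_four_le_topIndex : S.faceLen - 4 ≤ S.topIndex u q := by
  unfold topIndex
  split_ifs <;> omega

theorem right_node_of_lt (h : k < S.topIndex u q) : S.right (node u q k) = node u q (k + 1) :=
  if_pos h

theorem IsRightmost.right_node (h : S.IsRightmost u q) :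
    S.right (node u q (S.faceLen - 4)) = node (S.right u) (S.rot.symm (S.next.symm q)) 0 := by
  rw [right, topIndex_of_isRightmost h, if_neg (lt_irrefl _), if_pos h]

theorem right_node_of_not_isRightmost (h : ¬S.IsRightmost u q) :
    S.right (node u q (S.faceLen - 3)) = node u (S.rot.symm q) 0 := by
  rw [right, topIndex_of_not_isRightmost h, if_neg (lt_irrefl _), if_neg h]

theorem IsLeftmost.left_node (h : S.IsLeftmost u q) :
    S.left (node u q 0) = node (S.left u) (S.next (S.rot q)) (S.faceLen - 4) :=
  if_pos h

theorem left_node_of_not_isLeftmost (h : ¬S.IsLeftmost u q) :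
    S.left (node u q 0) = node u (S.rot q) (S.faceLen - 3) :=
  if_neg h

theorem Valid.lt_or_top (h : S.Valid (node u q k)) : k < S.topIndex u q ∨
    (S.IsRightmost u q ∧ k = S.faceLen - 4) ∨ (¬S.IsRightmost u q ∧ k = S.faceLen - 3) := by
  rcases h.2.2.lt_or_eq with hlt | rfl
  · exact Or.inl hlt
  · by_cases hr : S.IsRightmost u q
    · exact Or.inr (Or.inl ⟨hr, topIndex_of_isRightmost hr⟩)
    · exact Or.inr (Or.inr ⟨hr, topIndex_of_not_isRightmost hr⟩)

theorem rightLetter_left (h : S.leftLetter v = some p) :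
    S.rightLetter (S.left v) = some (S.rev p) := by
  have hn := S.four_le_faceLen
  match v with
  | node u q (k + 1) =>
    obtain rfl := Option.some.inj h
    exact congrArg some (S.rev_rev _).symm
  | node u q 0 =>
    obtain rfl := Option.some.inj h
    rw [rev_rot_symm]
    by_cases hl : S.IsLeftmost u q
    · rw [hl.left_node, rightLetter, show S.faceLen - 4 + 1 = S.faceLen - 3 by omega,
        S.next_iterate_faceLen_sub (by omega)]
      simp [rot]
    · rw [left_node_of_not_isLeftmost hl, rightLetter,
        show S.faceLen - 3 + 1 = S.faceLen - 2 by omega, S.next_iterate_faceLen_sub (by omega)]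
      simp [rot]

theorem Valid.leftLetter_right (hv : S.Valid v) (h : S.rightLetter v = some p) :
    S.leftLetter (S.right v) = some (S.rev p) := by
  have hn := S.four_le_faceLen
  obtain - | ⟨u, q, k⟩ := v
  · cases h
  obtain rfl := Option.some.inj h
  rcases hv.lt_or_top with hk | ⟨hr, rfl⟩ | ⟨hr, rfl⟩
  · rw [right_node_of_lt hk, leftLetter]
  · rw [hr.right_node, leftLetter, show S.faceLen - 4 + 1 = S.faceLen - 3 by omega,
      S.next_iterate_faceLen_sub (by omega), rev_rot_symm]
    rfl
  · rw [right_node_of_not_isRightmost hr, leftLetter,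
      show S.faceLen - 3 + 1 = S.faceLen - 2 by omega, S.next_iterate_faceLen_sub (by omega),
      rev_rot_symm]
    rfl

theorem IsLeftmost.isRightmost_left (h : S.IsLeftmost u q) :
    S.IsRightmost (S.left u) (S.next (S.rot q)) := by
  rw [← rot_rev, isRightmost_rot_iff]
  exact rightLetter_left h

theorem IsRightmost.isLeftmost_right (hu : S.Valid u) (h : S.IsRightmost u q) :
    S.IsLeftmost (S.right u) (S.rot.symm (S.next.symm q)) := by
  rw [IsLeftmost, Equiv.apply_symm_apply, ← rev_rot_symm]
  exact hu.leftLetter_right h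

theorem Valid.left_right (hv : S.Valid v) : S.left (S.right v) = v := by
  induction v with
  | root => rfl
  | node u q k ih =>
    rcases hv.lt_or_top with hk | ⟨hr, rfl⟩ | ⟨hr, rfl⟩
    · rw [right_node_of_lt hk, left]
    · rw [hr.right_node, (hr.isLeftmost_right hv.1).left_node, ih hv.1]
      simp
    · rw [right_node_of_not_isRightmost hr,
        left_node_of_not_isLeftmost hv.2.1.not_isLeftmost_rot_symm, Equiv.apply_symm_apply]

theorem Valid.right_left (hv : S.Valid v) : S.right (S.left v) = v := by
  induction v with
  | root => rfl
  | node u q k ih =>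
    cases k with
    | succ k => exact right_node_of_lt hv.2.2
    | zero =>
      by_cases hl : S.IsLeftmost u q
      · rw [hl.left_node, hl.isRightmost_left.right_node, ih hv.1]
        simp
      · rw [left_node_of_not_isLeftmost hl,
          right_node_of_not_isRightmost hv.2.1.not_isRightmost_rot, Equiv.symm_apply_apply]

theorem Valid.right (hv : S.Valid v) : S.Valid (S.right v) := by
  induction v with
  | root => exact hv
  | node u q k ih =>
    rcases hv.lt_or_top with hk | ⟨hr, rfl⟩ | ⟨hr, rfl⟩
    · rw [right_node_of_lt hk]
      exact ⟨hv.1, hv.2.1, hk⟩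
    · rw [hr.right_node]
      exact ⟨ih hv.1, (hr.isLeftmost_right hv.1).ascends, Nat.zero_le _⟩
    · rw [right_node_of_not_isRightmost hr]
      exact ⟨hv.1, hv.2.1.rot_symm hr, Nat.zero_le _⟩

theorem Valid.left (hv : S.Valid v) : S.Valid (S.left v) := by
  induction v with
  | root => exact hv
  | node u q k ih =>
    cases k with
    | succ k => exact ⟨hv.1, hv.2.1, (Nat.le_succ k).trans hv.2.2⟩
    | zero =>
      by_cases hl : S.IsLeftmost u q
      · rw [hl.left_node]
        refine ⟨ih hv.1, ?_, faceLen_sub_four_le_topIndex⟩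
        rw [← rot_rev]
        exact ascends_rot_of_rightLetter (rightLetter_left hl)
      · rw [left_node_of_not_isLeftmost hl]
        exact ⟨hv.1, hv.2.1.rot hl, (topIndex_of_not_isRightmost hv.2.1.not_isRightmost_rot).ge⟩

theorem Ascends.step (h : S.Ascends v p) : S.step v p = node v p 0 := by
  rw [TilingSystem.step, if_neg h.1, if_neg h.2.1, if_neg h.2.2]

theorem step_of_rightLetter (h : S.rightLetter v = some p) : S.step v p = S.right v :=
  if_pos h

theorem step_of_leftLetter (h : S.leftLetter v = some p) : S.step v p = S.left v := by
  rw [step, if_neg fun hr => leftLetter_ne_of_rightLetter hr h, if_pos h]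

theorem step_node_zero_rev : S.step (node u q 0) (S.rev q) = u := by
  have hr : S.rightLetter (node u q 0) ≠ some (S.rev q) := fun h =>
    S.rot_ne (S.rev q) ((S.rot_rev q).trans (Option.some.inj h))
  have hl : S.leftLetter (node u q 0) ≠ some (S.rev q) := fun h =>
    S.rot_ne (S.rev q) ((Equiv.symm_apply_eq _).1 (Option.some.inj h)).symm
  rw [step, if_neg hr, if_neg hl]
  exact if_pos rfl

variable (S) in
theorem ascends_or_letter (v : LayeredVertex P) (p : P) : S.Ascends v p ∨
    S.rightLetter v = some p ∨ S.leftLetter v = some p ∨ ∃ u q, v = node u q 0 ∧ p = S.rev q := by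
  by_cases hd : S.downLetter v = some p
  · match v with
    | root => cases hd
    | node u q 0 => exact Or.inr (Or.inr (Or.inr ⟨u, q, rfl, (Option.some.inj hd).symm⟩))
  · unfold Ascends
    tauto

theorem Valid.step (hv : S.Valid v) (p : P) : S.Valid (S.step v p) := by
  rcases S.ascends_or_letter v p with h | h | h | ⟨u, q, rfl, rfl⟩
  · rw [h.step]
    exact ⟨hv, h, Nat.zero_le _⟩
  · rw [step_of_rightLetter h]
    exact hv.right
  · rw [step_of_leftLetter h]
    exact hv.left
  · rw [step_node_zero_rev]
    exact hv.1

theorem Valid.step_step_rev (hv : S.Valid v) (p : P) : S.step (S.step v p) (S.rev p) = v := by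
  rcases S.ascends_or_letter v p with h | h | h | ⟨u, q, rfl, rfl⟩
  · rw [h.step, step_node_zero_rev]
  · rw [step_of_rightLetter h, step_of_leftLetter (hv.leftLetter_right h), hv.left_right]
  · rw [step_of_leftLetter h, step_of_rightLetter (rightLetter_left h), hv.right_left]
  · rw [step_node_zero_rev, S.rev_rev, hv.2.1.step]

variable (S) in
/-- One step along the face to the left of the direction `x.2` at the vertex `x.1`. -/
def traverse (x : LayeredVertex P × P) : LayeredVertex P × P :=
  (S.step x.1 x.2, S.next x.2)

theorem traverse_of_rightLetter (h : S.rightLetter v = some p) :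
    S.traverse (v, p) = (S.right v, S.next p) :=
  congrArg (·, S.next p) (step_of_rightLetter h)

theorem traverse_of_leftLetter (h : S.leftLetter v = some p) :
    S.traverse (v, p) = (S.left v, S.next p) :=
  congrArg (·, S.next p) (step_of_leftLetter h)

theorem traverse_node_zero_rev : S.traverse (node u q 0, S.rev q) = (u, S.next (S.rev q)) :=
  congrArg (·, _) step_node_zero_rev

theorem traverse_injOn : Set.InjOn S.traverse {x | S.Valid x.1} := by
  rintro ⟨v, p⟩ (hv : S.Valid v) ⟨w, q⟩ (hw : S.Valid w) h
  obtain ⟨hstep, hnext⟩ : S.step v p = S.step w q ∧ S.next p = S.next q := Prod.mk.inj h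
  obtain rfl := S.next.injective hnext
  rw [← hv.step_step_rev p, hstep, hw.step_step_rev p]

theorem mapsTo_traverse : Set.MapsTo S.traverse {x | S.Valid x.1} {x | S.Valid x.1} :=
  fun x hx => Valid.step hx x.2

theorem Ascends.traverse_iterate (h : S.Ascends u q) (hk : k ≤ S.topIndex u q) :
    S.traverse^[k + 1] (u, q) = (node u q k, S.next^[k + 1] q) := by
  induction k with
  | zero => exact congrArg (·, S.next q) h.step
  | succ k ih =>
    rw [iterate_succ_apply', ih (Nat.le_of_succ_le hk), traverse_of_rightLetter rfl,
      right_node_of_lt hk, ← iterate_succ_apply' S.next]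

theorem isPeriodicPt_traverse_of_ascends_of_isRightmost (hu : S.Valid u) (h : S.Ascends u q)
    (hr : S.IsRightmost u q) : IsPeriodicPt S.traverse S.faceLen (u, q) := by
  have hn := S.four_le_faceLen
  have climb := h.traverse_iterate (topIndex_of_isRightmost hr).ge
  have across : S.traverse^[S.faceLen - 2] (u, q) =
      (node (S.right u) (S.rot.symm (S.next.symm q)) 0, S.rev (S.rot.symm (S.next.symm q))) := by
    rw [show S.faceLen - 2 = S.faceLen - 4 + 1 + 1 by omega, iterate_succ_apply', climb,
      traverse_of_rightLetter rfl, hr.right_node, ← iterate_succ_apply' S.next,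
      show (S.faceLen - 4 + 1).succ = S.faceLen - 2 by omega,
      S.next_iterate_faceLen_sub (by omega), rev_rot_symm]
    rfl
  have down : S.traverse^[S.faceLen - 1] (u, q) = (S.right u, S.next.symm q) := by
    rw [show S.faceLen - 1 = S.faceLen - 2 + 1 by omega, iterate_succ_apply', across,
      traverse_node_zero_rev, rev_rot_symm, Equiv.apply_symm_apply]
  have back : S.leftLetter (S.right u) = some (S.next.symm q) := by
    rw [← rev_rot_symm]
    exact hu.leftLetter_right hr
  rw [IsPeriodicPt, IsFixedPt, show S.faceLen = S.faceLen - 1 + 1 by omega, iterate_succ_apply',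
    down, traverse_of_leftLetter back, hu.left_right, Equiv.apply_symm_apply]

theorem isPeriodicPt_traverse_of_ascends_of_not_isRightmost (h : S.Ascends u q)
    (hr : ¬S.IsRightmost u q) : IsPeriodicPt S.traverse S.faceLen (u, q) := by
  have hn := S.four_le_faceLen
  have climb := h.traverse_iterate (topIndex_of_not_isRightmost hr).ge
  have across : S.traverse^[S.faceLen - 1] (u, q) =
      (node u (S.rot.symm q) 0, S.rev (S.rot.symm q)) := by
    rw [show S.faceLen - 1 = S.faceLen - 3 + 1 + 1 by omega, iterate_succ_apply', climb,
      traverse_of_rightLetter rfl, right_node_of_not_isRightmost hr,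
      ← iterate_succ_apply' S.next, show (S.faceLen - 3 + 1).succ = S.faceLen - 1 by omega,
      S.next_iterate_faceLen_sub (by omega), rev_rot_symm]
    rfl
  rw [IsPeriodicPt, IsFixedPt, show S.faceLen = S.faceLen - 1 + 1 by omega, iterate_succ_apply',
    across, traverse_node_zero_rev, rev_rot_symm, Equiv.apply_symm_apply]

theorem isPeriodicPt_traverse_of_ascends (hu : S.Valid u) (h : S.Ascends u q) :
    IsPeriodicPt S.traverse S.faceLen (u, q) := by
  by_cases hr : S.IsRightmost u q
  · exact isPeriodicPt_traverse_of_ascends_of_isRightmost hu h hr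
  · exact isPeriodicPt_traverse_of_ascends_of_not_isRightmost h hr

theorem isPeriodicPt_of_traverse {x : LayeredVertex P × P} (hx : S.Valid x.1) {m : ℕ}
    (h : IsPeriodicPt S.traverse m (S.traverse x)) : IsPeriodicPt S.traverse m x := by
  apply traverse_injOn ((mapsTo_traverse.iterate m) hx) hx
  rw [← iterate_succ_apply' S.traverse, iterate_succ_apply]
  exact h

theorem isPeriodicPt_traverse_of_leftLetter (hv : S.Valid v) (h : S.leftLetter v = some p) :
    IsPeriodicPt S.traverse S.faceLen (v, p) := by
  apply isPeriodicPt_of_traverse hv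
  rw [traverse_of_leftLetter h, ← rot_rev]
  exact isPeriodicPt_traverse_of_ascends hv.left (ascends_rot_of_rightLetter (rightLetter_left h))

theorem isPeriodicPt_traverse (hv : S.Valid v) (p : P) :
    IsPeriodicPt S.traverse S.faceLen (v, p) := by
  rcases S.ascends_or_letter v p with h | h | h | ⟨u, q, rfl, rfl⟩
  · exact isPeriodicPt_traverse_of_ascends hv h
  · obtain - | ⟨u, q, k⟩ := v
    · cases h
    obtain rfl := Option.some.inj h
    rw [← hv.2.1.traverse_iterate hv.2.2]
    exact (isPeriodicPt_traverse_of_ascends hv.1 hv.2.1).apply_iterate _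
  · exact isPeriodicPt_traverse_of_leftLetter hv h
  · apply isPeriodicPt_of_traverse hv
    rw [traverse_node_zero_rev]
    by_cases hl : S.IsLeftmost u q
    · exact isPeriodicPt_traverse_of_leftLetter hv.1 hl
    · exact isPeriodicPt_traverse_of_ascends hv.1 (hv.2.1.rot hl)

theorem foldl_step_iterate (m : ℕ) (v : LayeredVertex P) (p : P) :
    (List.iterate S.next p m).foldl S.step v = (S.traverse^[m] (v, p)).1 := by
  induction m generalizing v p with
  | zero => rfl
  | succ _ ih => exact ih _ _

theorem Valid.foldl_step_face (hv : S.Valid v) (p : P) :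
    (List.iterate S.next p S.faceLen).foldl S.step v = v := by
  rw [foldl_step_iterate, isPeriodicPt_traverse hv p]

variable (S) in
/-- The word read when walking a path reading `w` backwards. -/
def revWord (w : List P) : List P :=
  (w.map S.rev).reverse

theorem revWord_revWord (w : List P) : S.revWord (S.revWord w) = w := by
  simp [revWord, Function.comp_def, S.rev_rev]

variable (S) in
/-- `w` contains, read forwards or backwards, all but three of the sides of a face. -/
def HasLongArc (w : List P) : Prop :=
  ∃ p, List.iterate S.next p (S.faceLen - 3) <:+: w ∨
    S.revWord (List.iterate S.next p (S.faceLen - 3)) <:+: w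

variable (S) in
/-- `w` ends with the sides of a face, read counterclockwise, from its vertex in the layer below `v`
up to `v`. -/
def ForwardTrail (w : List P) (v : LayeredVertex P) : Prop :=
  ∃ u q k, v = node u q k ∧ List.iterate S.next q (k + 1) <:+ w

variable (S) in
/-- `w` ends with `j` sides of a face read clockwise, from its vertex of index `k + j` to its vertex
`v` of index `k`. The bound on `k + j` says that the former is the last or the last but one vertex
of the face in the layer of `v`. -/
def BackwardTrail (w : List P) (v : LayeredVertex P) : Prop :=
  ∃ u q k j, v = node u q k ∧ 0 < j ∧ S.faceLen - 3 ≤ k + j ∧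
    S.revWord (List.iterate S.next (S.next^[k + 1] q) j) <:+ w

variable {w : List P} {n m : ℕ}

theorem HasLongArc.mono {w' : List P} (h : S.HasLongArc w) (hw : w <:+: w') : S.HasLongArc w' := by
  obtain ⟨p, h | h⟩ := h
  exacts [⟨p, Or.inl (h.trans hw)⟩, ⟨p, Or.inr (h.trans hw)⟩]

theorem lt_of_iterate_suffix (hw : ¬S.HasLongArc w) (h : List.iterate S.next p m <:+ w) :
    m < S.faceLen - 3 := by
  by_contra! hm
  exact hw ⟨p, Or.inl ((iterate_prefix_iterate _ _ hm).isInfix.trans h.isInfix)⟩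

theorem lt_of_revWord_iterate_suffix (hw : ¬S.HasLongArc w)
    (h : S.revWord (List.iterate S.next p m) <:+ w) : m < S.faceLen - 3 := by
  by_contra! hm
  have := ((iterate_prefix_iterate S.next p hm).map S.rev).reverse
  exact hw ⟨p, Or.inr (this.trans h).isInfix⟩

theorem revWord_iterate_succ (p : P) (m : ℕ) : S.revWord (List.iterate S.next p (m + 1)) =
    S.revWord (List.iterate S.next (S.next p) m) ++ [S.rev p] := by
  simp [revWord, List.iterate]

theorem forwardTrail_of_ascends (h : S.Ascends v p) : S.ForwardTrail (w ++ [p]) (S.step v p) :=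
  ⟨v, p, 0, h.step, List.suffix_append _ _⟩

theorem ForwardTrail.of_rightLetter (h : S.ForwardTrail w v) (hw : ¬S.HasLongArc w)
    (hp : S.rightLetter v = some p) : S.ForwardTrail (w ++ [p]) (S.step v p) := by
  obtain ⟨u, q, k, rfl, hs⟩ := h
  rw [step_of_rightLetter hp]
  obtain rfl := Option.some.inj hp
  refine ⟨u, q, k + 1, right_node_of_lt ?_, ?_⟩
  · have hlt := lt_of_iterate_suffix hw hs
    have htop := S.faceLen_sub_four_le_topIndex (u := u) (q := q)
    omega
  · rw [iterate_succ_eq_append]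
    exact suffix_append_singleton _ hs

theorem ForwardTrail.backwardTrail_of_leftLetter (h : S.ForwardTrail w v)
    (hred : ∀ a ∈ w.getLast?, p ≠ S.rev a) (hp : S.leftLetter v = some p) :
    S.BackwardTrail (w ++ [p]) (S.step v p) := by
  have hn := S.four_le_faceLen
  obtain ⟨u, q, k, rfl, hs⟩ := h
  rw [step_of_leftLetter hp]
  have hright := rightLetter_left hp
  obtain - | k := k
  · obtain ⟨u', q', k', he, hk⟩ :
        ∃ u' q' k', S.left (node u q 0) = node u' q' k' ∧ S.faceLen - 4 ≤ k' := by
      by_cases hl : S.IsLeftmost u q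
      · exact ⟨_, _, _, hl.left_node, le_rfl⟩
      · exact ⟨_, _, _, left_node_of_not_isLeftmost hl, by omega⟩
    rw [he] at hright ⊢
    refine ⟨u', q', k', 1, rfl, one_pos, by omega, ?_⟩
    rw [revWord_iterate_succ, Option.some.inj hright, S.rev_rev]
    exact List.suffix_append _ _
  · rw [iterate_succ_eq_append] at hs
    exact absurd (Option.some.inj hp).symm (hred _ (mem_getLast?_of_suffix hs))

theorem BackwardTrail.of_leftLetter (h : S.BackwardTrail w v) (hw : ¬S.HasLongArc w)
    (hp : S.leftLetter v = some p) : S.BackwardTrail (w ++ [p]) (S.step v p) := by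
  obtain ⟨u, q, k, j, rfl, -, hkj, hs⟩ := h
  have hlt := lt_of_revWord_iterate_suffix hw hs
  rw [step_of_leftLetter hp]
  obtain - | k := k
  · omega
  obtain rfl := Option.some.inj hp
  refine ⟨u, q, k, j + 1, rfl, Nat.succ_pos j, by omega, ?_⟩
  rw [revWord_iterate_succ, ← iterate_succ_apply' S.next]
  exact suffix_append_singleton _ hs

theorem BackwardTrail.rightLetter_ne (h : S.BackwardTrail w v)
    (hred : ∀ a ∈ w.getLast?, p ≠ S.rev a) : S.rightLetter v ≠ some p := by
  obtain ⟨u, q, k, j, rfl, hj, -, hs⟩ := h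
  obtain ⟨j, rfl⟩ := Nat.exists_eq_add_one_of_ne_zero hj.ne'
  rw [revWord_iterate_succ] at hs
  intro hp
  exact hred _ (mem_getLast?_of_suffix hs) (by rw [S.rev_rev]; exact (Option.some.inj hp).symm)

/-- To descend, such a path would have to backtrack or to follow a face from one end of its layer to
the other. -/
theorem forwardTrail_or_backwardTrail (hne : w ≠ []) (hred : w.IsChain fun a b => b ≠ S.rev a)
    (hw : ¬S.HasLongArc w) :
    S.ForwardTrail w (w.foldl S.step root) ∨ S.BackwardTrail w (w.foldl S.step root) := by
  induction w using List.reverseRecOn with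
  | nil => exact absurd rfl hne
  | append_singleton w p ih =>
    rw [List.foldl_append, List.foldl_cons, List.foldl_nil]
    rcases eq_or_ne w [] with rfl | hne
    · exact Or.inl (forwardTrail_of_ascends ⟨nofun, nofun, nofun⟩)
    obtain ⟨hred, -, hlast⟩ := List.isChain_append.1 hred
    replace hlast : ∀ a ∈ w.getLast?, p ≠ S.rev a := fun a ha => hlast a ha p rfl
    replace hw : ¬S.HasLongArc w := fun h => hw (h.mono (List.prefix_append _ _).isInfix)
    specialize ih hne hred hw
    generalize w.foldl S.step root = v at ih ⊢
    rcases S.ascends_or_letter v p with h | h | h | ⟨u, q, rfl, rfl⟩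
    · exact Or.inl (forwardTrail_of_ascends h)
    · exact ih.imp (·.of_rightLetter hw h) fun hb => absurd h (hb.rightLetter_ne hlast)
    · exact Or.inr (ih.elim (·.backwardTrail_of_leftLetter hlast h) (·.of_leftLetter hw h))
    · exfalso
      rcases ih with ⟨_, _, _, ⟨⟩, hs⟩ | ⟨_, _, _, j, ⟨⟩, -, hj, hs⟩
      · exact hlast _ (mem_getLast?_of_suffix (s := []) hs) rfl
      · have := lt_of_revWord_iterate_suffix hw hs
        omega

theorem hasLongArc_of_foldl_step_eq_root (hne : w ≠ []) (hred : w.IsChain fun a b => b ≠ S.rev a)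
    (hroot : w.foldl S.step root = root) : S.HasLongArc w := by
  by_contra hw
  rcases forwardTrail_or_backwardTrail hne hred hw with ⟨_, _, _, h, -⟩ | ⟨_, _, _, _, h, -⟩ <;>
    exact absurd (hroot.symm.trans h) nofun

end TilingSystem

namespace Letter

open Function

variable {g : ℕ}

/-- The letter read when an edge is traversed backwards. -/
def inv (s : Letter g) : Letter g :=
  (s.1, !s.2)

/-- The place of a letter in the relator, where every letter occurs exactly once. -/
def relEquiv (g : ℕ) : Letter g ≃ Fin (4 * g) where
  toFun s := ⟨if (s.1 : ℕ) % 2 = 0 then if s.2 then 2 * s.1 else 2 * s.1 + 2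
    else if s.2 then 2 * s.1 - 1 else 2 * s.1 + 1, by have := s.1.2; split_ifs <;> omega⟩
  invFun p := (relLabel g p, relSign g p)
  left_inv := by
    rintro ⟨⟨a, ha⟩, b⟩
    rw [Prod.mk.injEq, Fin.ext_iff]
    cases b <;> rcases Nat.mod_two_eq_zero_or_one a with h | h <;>
      simp [relLabel, relSign, h] <;> omega
  right_inv p := by
    rw [Fin.ext_iff]
    by_cases h : (p : ℕ) % 4 < 2 <;> simp only [relLabel, relSign, h] <;> split_ifs <;>
      simp_all <;> omega

/-- The letter following `s` in the cyclic word `relatorWord g`. -/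
def next (g : ℕ) : Equiv.Perm (Letter g) :=
  (relEquiv g).symm.permCongr (finRotate (4 * g))

theorem inv_inv (s : Letter g) : s.inv.inv = s :=
  Prod.ext rfl (Bool.not_not _)

theorem ext_relEquiv {s t : Letter g} (h : (relEquiv g s : ℕ) = relEquiv g t) : s = t :=
  (relEquiv g).injective (Fin.ext h)

theorem relEquiv_inv (s : Letter g) : (relEquiv g s.inv : ℕ) =
    if (relEquiv g s : ℕ) % 4 < 2 then (relEquiv g s : ℕ) + 2 else relEquiv g s - 2 := by
  obtain ⟨⟨a, ha⟩, b⟩ := s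
  cases b <;> rcases Nat.mod_two_eq_zero_or_one a with h | h <;> simp [relEquiv, inv, h] <;>
    grind

theorem relEquiv_next (s : Letter g) :
    (relEquiv g (next g s) : ℕ) = (relEquiv g s + 1) % (4 * g) := by
  simp [next, finRotate_apply, Fin.val_add]

theorem relEquiv_next_eq_ite (s : Letter g) : (relEquiv g (next g s) : ℕ) =
    if (relEquiv g s : ℕ) + 1 = 4 * g then 0 else (relEquiv g s : ℕ) + 1 := by
  have hs := (relEquiv g s).2
  rw [relEquiv_next]
  split_ifs with h
  · rw [h, Nat.mod_self]
  · exact Nat.mod_eq_of_lt (by omega)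

theorem relEquiv_next_iterate (k : ℕ) (s : Letter g) :
    (relEquiv g ((next g)^[k] s) : ℕ) = (relEquiv g s + k) % (4 * g) := by
  induction k with
  | zero => exact (Nat.mod_eq_of_lt (relEquiv g s).2).symm
  | succ k ih => rw [iterate_succ_apply', relEquiv_next, ih, Nat.mod_add_mod, add_assoc]

theorem next_iterate_length_relator (s : Letter g) : (next g)^[4 * g] s = s := by
  apply ext_relEquiv
  rw [relEquiv_next_iterate, Nat.add_mod_right, Nat.mod_eq_of_lt (relEquiv g s).2]

theorem next_inv_iterate_ne (s : Letter g) (j : ℕ) (h0 : 0 < j) (h4 : j < 4) :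
    (next g ∘ inv)^[j] s ≠ s := by
  intro h
  replace h := congrArg (fun t => (relEquiv g t : ℕ)) h
  have hs := (relEquiv g s).2
  interval_cases j <;>
    simp only [iterate_succ, iterate_zero, comp_apply, id, relEquiv_next_eq_ite,
      relEquiv_inv] at h <;>
    generalize (relEquiv g s : ℕ) = i at * <;> grind

theorem posLv_eq (s : Letter g) : posLv s =
    if (relEquiv g s : ℕ) % 4 = 1 then (relEquiv g s : ℕ) + 2
    else if (relEquiv g s : ℕ) % 4 = 3 then relEquiv g s - 2 else relEquiv g s := by
  obtain ⟨⟨a, ha⟩, b⟩ := s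
  cases b <;> rcases Nat.mod_two_eq_zero_or_one a with h | h <;>
    simp [relEquiv, posLv, posIn, posOut, h] <;> split_ifs <;> omega

theorem posArr_eq_posLv_inv (s : Letter g) : posArr s = posLv s.inv := by
  obtain ⟨a, b⟩ := s
  cases b <;> rfl

theorem gapN_next (s : Letter g) : gapN s (next g s) = 0 := by
  have hs := (relEquiv g s).2
  have hpos : posLv (next g s) = posArr s + 1 ∨
      posLv (next g s) = 0 ∧ posArr s + 1 = 4 * g := by
    rw [posArr_eq_posLv_inv, posLv_eq, posLv_eq, relEquiv_next_eq_ite, relEquiv_inv]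
    generalize (relEquiv g s : ℕ) = i at hs
    clear s
    grind
  rcases hpos with h | ⟨h, h'⟩
  · rw [gapN, h, Nat.add_sub_cancel_left, Nat.mod_self]
  · rw [gapN, h, h', zero_add, Nat.sub_self, Nat.zero_mod]

theorem relatorWord_eq_iterate (hg : 0 < 4 * g) :
    relatorWord g = List.iterate (next g) ((relEquiv g).symm ⟨0, hg⟩) (4 * g) := by
  apply List.ext_getElem (by simp [relatorWord])
  intro j h1 h2
  rw [List.length_iterate] at h2
  have hj : (relatorWord g)[j] = (relEquiv g).symm ⟨j, h2⟩ := by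
    simp [relatorWord, relEquiv]
  apply ext_relEquiv
  rw [hj, List.getElem_iterate, relEquiv_next_iterate, Equiv.apply_symm_apply,
    Equiv.apply_symm_apply, zero_add, Nat.mod_eq_of_lt h2]

theorem cycleChain_relatorWord (hg : 0 < 4 * g) :
    Cycle.Chain (fun s t => t = next g s) (relatorWord g) := by
  obtain ⟨k, hk⟩ := Nat.exists_eq_add_one_of_ne_zero hg.ne'
  have hperiod := next_iterate_length_relator ((relEquiv g).symm ⟨0, hg⟩)
  rw [relatorWord_eq_iterate hg]
  generalize (relEquiv g).symm ⟨0, hg⟩ = s at hperiod ⊢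
  rw [hk] at hperiod ⊢
  have hcons : s :: (List.iterate (next g) (next g s) k ++ [s]) =
      List.iterate (next g) s (k + 1 + 1) := by
    rw [iterate_succ_eq_append _ _ (k + 1), hperiod]
    rfl
  rw [List.iterate, Cycle.chain_coe_cons, hcons]
  exact isChain_iterate _ _ _

/-- The universal cover of `Σ_g`: every vertex has one outgoing direction for each letter, and the
boundaries of the faces read the relator. -/
def surfaceTiling (hg : 0 < g) : TilingSystem (Letter g) where
  next := next g
  rev := inv
  faceLen := 4 * g
  four_le_faceLen := by omega
  rev_rev := inv_inv
  next_iterate_faceLen := next_iterate_length_relator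
  next_rev_iterate_ne := next_inv_iterate_ne

end Letter

section WordProblem

variable {g : ℕ} {G : Type*} [Group G]

theorem letterG_inv (s : Letter g) : letterG s.inv = (letterG s)⁻¹ := by
  obtain ⟨a, b⟩ := s
  cases b <;> simp [letterG, Letter.inv]

theorem lift_relatorF {f : Letter g → G} (hf : ∀ s, f s.inv = (f s)⁻¹) :
    FreeGroup.lift (fun a => f (a, true)) (relatorF g) = ((relatorWord g).map f).prod := by
  rw [relatorF, map_list_prod, List.map_map]
  congr 2
  ext1 ⟨a, b⟩
  have hinv : f (a, false) = (f (a, true))⁻¹ := hf (a, true)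
  cases b <;> simp [hinv]

theorem prod_map_eq_one_of_wordG_eq_one {f : Letter g → G} (hf : ∀ s, f s.inv = (f s)⁻¹)
    (hrel : ((relatorWord g).map f).prod = 1) {w : List (Letter g)} (hw : wordG w = 1) :
    (w.map f).prod = 1 := by
  have hlift : ∀ r ∈ ({relatorF g} : Set (FreeGroup (Fin (2 * g)))),
      FreeGroup.lift (fun a => f (a, true)) r = 1 := by
    rintro _ rfl
    rw [lift_relatorF hf, hrel]
  have himage : PresentedGroup.toGroup hlift ∘ letterG = f := by
    ext1 ⟨a, b⟩
    have hinv : f (a, false) = (f (a, true))⁻¹ := hf (a, true)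
    cases b <;> simp [letterG, hinv]
  rw [← himage, ← List.map_map, ← map_list_prod]
  exact (congrArg _ hw).trans (map_one _)

theorem foldl_eq_of_wordG_eq_one {X : Type*} {act : X → Letter g → X}
    (hinv : ∀ x s, act (act x s) s.inv = x) (hrel : ∀ x, (relatorWord g).foldl act x = x)
    {w : List (Letter g)} (hw : wordG w = 1) (x : X) : w.foldl act x = x := by
  let f (s : Letter g) : (Equiv.Perm X)ᵐᵒᵖ := MulOpposite.op
    { toFun := fun x => act x s
      invFun := fun x => act x s.inv
      left_inv := fun x => hinv x s
      right_inv := fun x => by simpa only [s.inv_inv] using hinv x s.inv }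
  have hfold (w : List (Letter g)) (x : X) : ((w.map f).prod.unop) x = w.foldl act x := by
    induction w generalizing x with
    | nil => rfl
    | cons s _ ih => exact ih (act x s)
  have hf (s : Letter g) : f s.inv = (f s)⁻¹ :=
    MulOpposite.unop_injective (Equiv.ext fun _ => rfl)
  have hprod : ((relatorWord g).map f).prod = 1 :=
    MulOpposite.unop_injective (Equiv.ext fun x => (hfold _ x).trans (hrel x))
  rw [← hfold, prod_map_eq_one_of_wordG_eq_one hf hprod hw]
  rfl

theorem foldl_step_eq_of_wordG_eq_one (hg : 0 < g) {w : List (Letter g)} (hw : wordG w = 1)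
    {v : LayeredVertex (Letter g)} (hv : (Letter.surfaceTiling hg).Valid v) :
    w.foldl (Letter.surfaceTiling hg).step v = v := by
  let S := Letter.surfaceTiling hg
  let act (x : {v // S.Valid v}) (s : Letter g) : {v // S.Valid v} := ⟨S.step x s, x.2.step s⟩
  have hcoe (w : List (Letter g)) (x : {v // S.Valid v}) :
      ((w.foldl act x : {v // S.Valid v}) : LayeredVertex (Letter g)) = w.foldl S.step x :=
    (List.foldl_hom Subtype.val fun _ _ => rfl).symm
  have hrel (x : {v // S.Valid v}) : (relatorWord g).foldl act x = x := by
    apply Subtype.ext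
    rw [hcoe, Letter.relatorWord_eq_iterate (by omega)]
    exact x.2.foldl_step_face _
  rw [← hcoe w ⟨v, hv⟩, foldl_eq_of_wordG_eq_one (fun x s => Subtype.ext (x.2.step_step_rev s))
    hrel hw]

theorem hasLongArc_of_wordG_eq_one (hg : 0 < g) {w : List (Letter g)} (hne : w ≠ [])
    (hred : w.IsChain fun s t => t ≠ s.inv) (hw : wordG w = 1) :
    (Letter.surfaceTiling hg).HasLongArc w :=
  TilingSystem.hasLongArc_of_foldl_step_eq_root hne hred
    (foldl_step_eq_of_wordG_eq_one hg hw trivial)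

theorem wordG_append (w₁ w₂ : List (Letter g)) : wordG (w₁ ++ w₂) = wordG w₁ * wordG w₂ := by
  rw [wordG, List.map_append, List.prod_append, wordG, wordG]

theorem wordG_relatorWord : wordG (relatorWord g) = 1 := by
  have hlift : FreeGroup.lift (fun a => letterG (a, true)) =
      PresentedGroup.mk ({relatorF g} : Set (FreeGroup (Fin (2 * g)))) := by
    ext1 a
    simp [letterG, PresentedGroup.of]
  rw [wordG, ← lift_relatorF letterG_inv, hlift]
  exact PresentedGroup.one_of_mem (Set.mem_singleton _)

theorem wordG_rotate_eq_one {w : List (Letter g)} (hw : wordG w = 1) (m : ℕ) :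
    wordG (w.rotate m) = 1 := by
  rw [List.rotate_eq_drop_append_take_mod, wordG_append, mul_eq_one_comm, ← wordG_append,
    List.take_append_drop, hw]

end WordProblem

namespace Complex

open Set (univ)

section Walks

variable {g : ℕ} {Y Z : Complex g} {u v w : Y.V} {l l₁ l₂ : List Y.D}

theorem dTail_dRev (d : Y.D) : Y.dTail (Y.dRev d) = Y.dHead d := by
  obtain ⟨e, b⟩ := d
  cases b <;> rfl

theorem dHead_dRev (d : Y.D) : Y.dHead (Y.dRev d) = Y.dTail d := by
  obtain ⟨e, b⟩ := d
  cases b <;> rfl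

theorem dRev_dRev (d : Y.D) : Y.dRev (Y.dRev d) = d :=
  Prod.ext rfl (Bool.not_not _)

theorem walkFrom_nil : Y.WalkFrom u v [] ↔ u = v :=
  ⟨fun h => by cases h; rfl, fun h => h ▸ .nil u⟩

theorem walkFrom_cons {d : Y.D} :
    Y.WalkFrom u v (d :: l) ↔ u = Y.dTail d ∧ Y.WalkFrom (Y.dHead d) v l :=
  ⟨fun h => by cases h with | cons _ h => exact ⟨rfl, h⟩, fun ⟨hu, h⟩ => hu ▸ .cons d h⟩

theorem walkFrom_append :
    Y.WalkFrom u v (l₁ ++ l₂) ↔ ∃ w, Y.WalkFrom u w l₁ ∧ Y.WalkFrom w v l₂ := by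
  induction l₁ generalizing u with
  | nil => simp only [List.nil_append, walkFrom_nil, exists_eq_left']
  | cons d l₁ ih => simp only [List.cons_append, walkFrom_cons, ih, and_assoc, exists_and_left]

theorem WalkFrom.append (h₁ : Y.WalkFrom u v l₁) (h₂ : Y.WalkFrom v w l₂) :
    Y.WalkFrom u w (l₁ ++ l₂) :=
  walkFrom_append.2 ⟨v, h₁, h₂⟩

theorem walkFrom_singleton (d : Y.D) : Y.WalkFrom (Y.dTail d) (Y.dHead d) [d] :=
  .cons d (.nil _)

theorem walkFrom_dRev_singleton (d : Y.D) : Y.WalkFrom (Y.dHead d) (Y.dTail d) [Y.dRev d] :=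
  walkFrom_cons.2 ⟨(dTail_dRev d).symm, walkFrom_nil.2 (dHead_dRev d)⟩

theorem WalkFrom.right_unique (h : Y.WalkFrom u v l) (h' : Y.WalkFrom u w l) : v = w := by
  induction h with
  | nil => exact walkFrom_nil.1 h'
  | cons d _ ih => exact ih (walkFrom_cons.1 h').2

theorem WalkFrom.isChain_adj (h : Y.WalkFrom u v l) : l.IsChain Y.adj := by
  induction h with
  | nil => exact .nil
  | @cons d v l h ih =>
    cases l with
    | nil => exact .singleton d
    | cons e l => exact .cons_cons (walkFrom_cons.1 h).1 ih

theorem WalkFrom.cycleChain_adj (h : Y.WalkFrom v v l) : Cycle.Chain Y.adj l := by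
  cases h with
  | nil => exact Cycle.Chain.nil _
  | cons d h =>
    rw [Cycle.chain_coe_cons]
    exact (WalkFrom.cons d (h.append (walkFrom_singleton d))).isChain_adj

theorem WalkFrom.rotate (h : Y.WalkFrom v v l) (n : ℕ) : ∃ w, Y.WalkFrom w w (l.rotate n) := by
  rw [← List.take_append_drop (n % l.length) l] at h
  obtain ⟨w, h₁, h₂⟩ := walkFrom_append.1 h
  rw [List.rotate_eq_drop_append_take_mod]
  exact ⟨w, h₂.append h₁⟩

theorem revW_append (l₁ l₂ : List Y.D) : Y.revW (l₁ ++ l₂) = Y.revW l₂ ++ Y.revW l₁ := by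
  rw [revW, List.map_append, List.reverse_append, revW, revW]

theorem revW_cons (d : Y.D) (l : List Y.D) : Y.revW (d :: l) = Y.revW l ++ [Y.dRev d] :=
  revW_append [d] l

theorem revW_revW (l : List Y.D) : Y.revW (Y.revW l) = l := by
  simp [revW, Function.comp_def, dRev_dRev]

theorem length_revW (l : List Y.D) : (Y.revW l).length = l.length := by
  rw [revW, List.length_reverse, List.length_map]

theorem WalkFrom.revW (h : Y.WalkFrom u v l) : Y.WalkFrom v u (Y.revW l) := by
  induction h with
  | nil => exact .nil _
  | cons d _ ih =>
    rw [revW_cons]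
    exact ih.append (walkFrom_dRev_singleton d)

theorem wordOf_append (l₁ l₂ : List Y.D) :
    Y.wordOf (l₁ ++ l₂) = Y.wordOf l₁ ++ Y.wordOf l₂ :=
  List.map_append

theorem wordOf_revW (l : List Y.D) :
    Y.wordOf (Y.revW l) = ((Y.wordOf l).map Letter.inv).reverse := by
  rw [wordOf, revW, List.map_reverse, List.map_map, wordOf, List.map_map]
  rfl

theorem wordG_wordOf_revW (l : List Y.D) :
    wordG (Y.wordOf (Y.revW l)) = (wordG (Y.wordOf l))⁻¹ := by
  rw [wordOf_revW, wordG, wordG, List.map_reverse, List.map_map, List.prod_inv_reverse,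
    List.map_map]
  congr 3
  exact funext letterG_inv

theorem dTail_mD (φ : Hom Y Z) (d : Y.D) : Z.dTail (φ.mD d) = φ.mV (Y.dTail d) := by
  obtain ⟨e, b⟩ := d
  cases b
  exacts [φ.hdst e, φ.hsrc e]

theorem dHead_mD (φ : Hom Y Z) (d : Y.D) : Z.dHead (φ.mD d) = φ.mV (Y.dHead d) := by
  obtain ⟨e, b⟩ := d
  cases b
  exacts [φ.hsrc e, φ.hdst e]

theorem wordOf_map_mD (φ : Hom Y Z) (l : List Y.D) : Z.wordOf (l.map φ.mD) = Y.wordOf l := by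
  rw [wordOf, List.map_map, wordOf]
  congr 1
  exact funext fun d => Prod.ext (φ.hlab d.1) rfl

theorem WalkFrom.of_map_mD {φ : Hom Y Z} (hφ : Function.Injective φ.mV) {z : Z.V}
    (h : Z.WalkFrom (φ.mV u) z (l.map φ.mD)) : ∃ v, φ.mV v = z ∧ Y.WalkFrom u v l := by
  induction l generalizing u with
  | nil => exact ⟨u, walkFrom_nil.1 h, .nil u⟩
  | cons d l ih =>
    obtain ⟨hu, h⟩ := walkFrom_cons.1 h
    rw [dTail_mD] at hu
    rw [dHead_mD] at h
    obtain ⟨v, hv, hl⟩ := ih h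
    exact ⟨v, hv, walkFrom_cons.2 ⟨hφ hu, hl⟩⟩

theorem WalkFrom.of_map_mD_closed {φ : Hom Y Z} (hφ : Function.Injective φ.mV) (hne : l ≠ [])
    {z : Z.V} (h : Z.WalkFrom z z (l.map φ.mD)) : ∃ v, Y.WalkFrom v v l := by
  obtain ⟨d, l, rfl⟩ := List.exists_cons_of_ne_nil hne
  obtain rfl : z = φ.mV (Y.dTail d) := (walkFrom_cons.1 h).1.trans (dTail_mD φ d)
  obtain ⟨v, hv, hl⟩ := h.of_map_mD hφ
  exact ⟨_, hφ hv ▸ hl⟩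

end Walks

section Homotopy

variable {g : ℕ} {Y : Complex g} {sE : Set Y.E} {sF : Set Y.F} {u v w u' v' : Y.V}
  {a b c s t x y : List Y.D}

theorem wordG_eq_one_of_faceLoop (hY : ∀ f ∈ sF, Y.wordOf (Y.bdry f) = relatorWord g)
    (h : Y.faceLoop sF b) : wordG (Y.wordOf b) = 1 := by
  obtain ⟨f, hf, n, hb⟩ := h
  have hrot : wordG (Y.wordOf ((Y.bdry f).rotate n)) = 1 := by
    rw [wordOf, List.map_rotate]
    exact wordG_rotate_eq_one ((congrArg wordG (hY f hf)).trans wordG_relatorWord) n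
  rcases hb with rfl | rfl
  · exact hrot
  · rw [wordG_wordOf_revW, hrot, inv_one]

theorem wordG_eq_of_elemMove (hY : ∀ f ∈ sF, Y.wordOf (Y.bdry f) = relatorWord g)
    (h : Y.elemMove sE sF a b) : wordG (Y.wordOf a) = wordG (Y.wordOf b) := by
  rcases h with ⟨l₁, l₂, d, -, rfl, rfl⟩ | ⟨l₁, l₂, b, hb, rfl, rfl⟩
  · have hback : wordG (Y.wordOf [d, Y.dRev d]) = 1 := by
      rw [← List.singleton_append, wordOf_append, wordG_append]
      exact mul_eq_one_iff_eq_inv'.2 (wordG_wordOf_revW [d])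
    change _ = wordG (Y.wordOf (l₁ ++ ([d, Y.dRev d] ++ l₂)))
    rw [wordOf_append, wordOf_append, wordOf_append, wordG_append, wordG_append, wordG_append,
      hback, one_mul]
  · rw [wordOf_append, wordOf_append, wordOf_append, wordG_append, wordG_append, wordG_append,
      wordG_eq_one_of_faceLoop hY hb, mul_one]

theorem Homotopic.wordG_eq (hY : ∀ f ∈ sF, Y.wordOf (Y.bdry f) = relatorWord g)
    (h : Y.Homotopic sE sF u v a b) : wordG (Y.wordOf a) = wordG (Y.wordOf b) := by
  induction h with
  | rel a b h =>
    obtain ⟨-, -, -, -, h | h⟩ := h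
    exacts [wordG_eq_of_elemMove hY h, (wordG_eq_of_elemMove hY h).symm]
  | refl => rfl
  | symm _ _ _ ih => exact ih.symm
  | trans _ _ _ _ _ ih ih' => exact ih.trans ih'

theorem inSet_univ (l : List Y.D) : Y.InSet univ l :=
  fun _ _ => trivial

theorem elemMove_append (h : Y.elemMove sE sF a b) (x y : List Y.D) :
    Y.elemMove sE sF (x ++ a ++ y) (x ++ b ++ y) := by
  rcases h with ⟨l₁, l₂, d, hd, rfl, rfl⟩ | ⟨l₁, l₂, b, hb, rfl, rfl⟩
  · exact Or.inl ⟨x ++ l₁, l₂ ++ y, d, hd, by simp, by simp⟩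
  · exact Or.inr ⟨x ++ l₁, l₂ ++ y, b, hb, by simp, by simp⟩

theorem elemMove_revW (h : Y.elemMove sE sF a b) :
    Y.elemMove sE sF (Y.revW a) (Y.revW b) := by
  rcases h with ⟨l₁, l₂, d, hd, rfl, rfl⟩ | ⟨l₁, l₂, b, ⟨f, hf, n, hb⟩, rfl, rfl⟩
  · exact Or.inl ⟨Y.revW l₂, Y.revW l₁, d, hd, revW_append _ _, by
      simp [revW_append, revW_cons, dRev_dRev]⟩
  · refine Or.inr ⟨Y.revW l₂, Y.revW l₁, Y.revW b, ⟨f, hf, n, ?_⟩, revW_append _ _, by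
      simp [revW_append]⟩
    rcases hb with rfl | rfl
    exacts [Or.inr rfl, Or.inl (revW_revW _)]

theorem Homotopic.refl (a : List Y.D) : Y.Homotopic sE sF u v a a :=
  Relation.EqvGen.refl a

theorem Homotopic.symm (h : Y.Homotopic sE sF u v a b) : Y.Homotopic sE sF u v b a :=
  Relation.EqvGen.symm _ _ h

theorem Homotopic.trans (h : Y.Homotopic sE sF u v a b) (h' : Y.Homotopic sE sF u v b c) :
    Y.Homotopic sE sF u v a c :=
  Relation.EqvGen.trans _ _ _ h h'

theorem Homotopic.map {F : List Y.D → List Y.D}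
    (hwalk : ∀ a, Y.WalkFrom u v a → Y.WalkFrom u' v' (F a))
    (hmove : ∀ a b, Y.elemMove univ sF a b → Y.elemMove univ sF (F a) (F b))
    (h : Y.Homotopic univ sF u v a b) : Y.Homotopic univ sF u' v' (F a) (F b) := by
  induction h with
  | rel a b h =>
    obtain ⟨ha, hb, -, -, h⟩ := h
    exact .rel _ _ ⟨hwalk a ha, hwalk b hb, inSet_univ _, inSet_univ _,
      h.imp (hmove a b) (hmove b a)⟩
  | refl => exact .refl _
  | symm _ _ _ ih => exact ih.symm
  | trans _ _ _ _ _ ih ih' => exact ih.trans ih'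

theorem Homotopic.append (h : Y.Homotopic univ sF u v a b) (hx : Y.WalkFrom u' u x)
    (hy : Y.WalkFrom v v' y) : Y.Homotopic univ sF u' v' (x ++ a ++ y) (x ++ b ++ y) :=
  h.map (F := fun a => x ++ a ++ y) (fun _ ha => (hx.append ha).append hy)
    fun _ _ h => elemMove_append h x y

theorem Homotopic.append_left (h : Y.Homotopic univ sF u v a b) (hx : Y.WalkFrom u' u x) :
    Y.Homotopic univ sF u' v (x ++ a) (x ++ b) := by
  simpa only [List.append_nil] using h.append hx (.nil v)

theorem Homotopic.append_right (h : Y.Homotopic univ sF u v a b) (hy : Y.WalkFrom v v' y) :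
    Y.Homotopic univ sF u v' (a ++ y) (b ++ y) :=
  h.append (.nil u) hy

theorem Homotopic.revW (h : Y.Homotopic univ sF u v a b) :
    Y.Homotopic univ sF v u (Y.revW a) (Y.revW b) :=
  h.map (fun _ => WalkFrom.revW) fun _ _ => elemMove_revW

theorem homotopic_backtrack_nil (d : Y.D) :
    Y.Homotopic univ sF (Y.dTail d) (Y.dTail d) [d, Y.dRev d] [] :=
  .symm (.rel _ _ ⟨.nil _, (walkFrom_singleton d).append (walkFrom_dRev_singleton d),
    inSet_univ _, inSet_univ _, Or.inl (Or.inl ⟨[], [], d, trivial, rfl, rfl⟩)⟩)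

theorem homotopic_nil_of_faceLoop (hb : Y.WalkFrom u u b) (h : Y.faceLoop sF b) :
    Y.Homotopic univ sF u u b [] :=
  .symm (.rel _ _ ⟨.nil u, hb, inSet_univ _, inSet_univ _,
    Or.inl (Or.inr ⟨[], [], b, h, rfl, (List.append_nil b).symm⟩)⟩)

theorem WalkFrom.homotopic_append_revW_nil (h : Y.WalkFrom u v a) :
    Y.Homotopic univ sF u u (a ++ Y.revW a) [] := by
  induction h with
  | nil => exact .refl _
  | @cons d _ a _ ih =>
    have hinner := ih.append (walkFrom_singleton d) (walkFrom_dRev_singleton d)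
    rw [List.append_assoc, List.append_assoc, ← revW_cons] at hinner
    exact hinner.trans (homotopic_backtrack_nil d)

theorem homotopic_revW_of_append_nil (hs : Y.WalkFrom u v s) (ht : Y.WalkFrom v u t)
    (h : Y.Homotopic univ sF u u (s ++ t) []) : Y.Homotopic univ sF u v s (Y.revW t) := by
  have hspur := (ht.homotopic_append_revW_nil (sF := sF)).append_left hs
  have hloop := h.append_right ht.revW
  rw [List.append_nil, ← List.append_assoc] at hspur
  exact hspur.symm.trans hloop

end Homotopy

section Faces

variable {g : ℕ} {Y : Complex g} {u v p q : Y.V} {f : Y.F} {d e : Y.D} {s : List Y.D}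

variable (Y) in
/-- A complex whose labelling is an immersion of the 1-skeleton into that of `Σ_g` and whose faces
are glued along closed walks reading the relator. It need not embed in a covering of `Σ_g`. -/
def IsPrecover : Prop :=
  Y.P1 ∧ ∀ f, (∃ v, Y.WalkFrom v v (Y.bdry f)) ∧ Y.wordOf (Y.bdry f) = relatorWord g

variable (Y) in
/-- The dart `e` follows `d` around the `4g`-gon on the left of `d`, whether or not that `4g`-gon
is present in `Y`. -/
def FaceSucc (d e : Y.D) : Prop :=
  Y.adj d e ∧ Y.dLet e = Letter.next g (Y.dLet d)

theorem IsTiledSurface.isPrecover (hg : 0 < g) (hY : Y.IsTiledSurface) : Y.IsPrecover := by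
  obtain ⟨Z, ⟨hP1, ⟨hface, -⟩, -⟩, φ, hV, hE, -⟩ := hY
  refine ⟨⟨fun e e' hv hl => hE (hP1.1 _ _ ?_ ?_), fun e e' hv hl => hE (hP1.2 _ _ ?_ ?_)⟩,
    fun f => ?_⟩
  · rw [φ.hsrc, φ.hsrc, hv]
  · rw [φ.hlab, φ.hlab, hl]
  · rw [φ.hdst, φ.hdst, hv]
  · rw [φ.hlab, φ.hlab, hl]
  · obtain ⟨⟨z, hz⟩, hword⟩ := hface (φ.mF f)
    have hbdry : Z.bdry (φ.mF f) = (Y.bdry f).map φ.mD := φ.hbdry f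
    rw [hbdry] at hz hword
    rw [wordOf_map_mD] at hword
    refine ⟨hz.of_map_mD_closed hV ?_, hword⟩
    intro hnil
    rw [hnil] at hword
    exact absurd (congrArg List.length hword) (by simp [wordOf, relatorWord]; omega)

theorem IsPrecover.eq_of_dTail_eq (hY : Y.IsPrecover) (hv : Y.dTail d = Y.dTail e)
    (hl : Y.dLet d = Y.dLet e) : d = e := by
  obtain ⟨d, b⟩ := d
  obtain ⟨e, b'⟩ := e
  obtain ⟨hl, rfl⟩ := Prod.mk.inj hl
  cases b
  · rw [hY.1.2 d e hv hl]
  · rw [hY.1.1 d e hv hl]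

theorem IsPrecover.eq_of_dHead_eq (hY : Y.IsPrecover) (hv : Y.dHead d = Y.dHead e)
    (hl : Y.dLet d = Y.dLet e) : d = e := by
  have h : Y.dRev d = Y.dRev e :=
    hY.eq_of_dTail_eq (by rw [dTail_dRev, dTail_dRev, hv]) (congrArg Letter.inv hl)
  rw [← dRev_dRev d, h, dRev_dRev]

theorem IsPrecover.rightUnique_faceSucc (hY : Y.IsPrecover) : Relator.RightUnique Y.FaceSucc :=
  fun _ _ _ h h' => hY.eq_of_dTail_eq (h.1.symm.trans h'.1) (h.2.trans h'.2.symm)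

theorem IsPrecover.leftUnique_faceSucc (hY : Y.IsPrecover) : Relator.LeftUnique Y.FaceSucc :=
  fun _ _ _ h h' => hY.eq_of_dHead_eq (h.1.trans h'.1.symm)
    ((Letter.next g).injective (h.2.symm.trans h'.2))

theorem IsPrecover.length_bdry (hY : Y.IsPrecover) (f : Y.F) : (Y.bdry f).length = 4 * g := by
  simpa [wordOf, relatorWord] using congrArg List.length (hY.2 f).2

theorem IsPrecover.exists_rotate_bdry (hY : Y.IsPrecover) (hd : d ∈ Y.bdry f) :
    ∃ n l, (Y.bdry f).rotate n = d :: l ∧ (d :: l ++ [d]).IsChain Y.FaceSucc := by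
  obtain ⟨l₁, l₂, hl⟩ := List.append_of_mem hd
  have hrot : (Y.bdry f).rotate l₁.length = d :: (l₂ ++ l₁) := by
    rw [hl, List.rotate_append_length_eq, List.cons_append]
  have hcycle : (Y.bdry f : Cycle Y.D) = (d :: (l₂ ++ l₁) : List Y.D) :=
    Cycle.coe_eq_coe.2 ⟨_, hrot⟩
  obtain ⟨v, hv⟩ := (hY.2 f).1
  have hadj := hv.cycleChain_adj
  have hword : Cycle.Chain (fun d e => Y.dLet e = Letter.next g (Y.dLet d)) (Y.bdry f) := by
    have hpos : 0 < 4 * g := hY.length_bdry f ▸ List.length_pos_of_mem hd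
    refine (Cycle.chain_map (r := fun a b => b = Letter.next g a) Y.dLet).1 ?_
    change Cycle.Chain _ (Y.wordOf (Y.bdry f) : Cycle (Letter g))
    rw [(hY.2 f).2]
    exact Letter.cycleChain_relatorWord hpos
  rw [hcycle, Cycle.chain_coe_cons] at hadj hword
  exact ⟨_, _, hrot, isChain_and hadj hword⟩

theorem IsPrecover.mem_bdry_of_faceSucc (hY : Y.IsPrecover) (h : Y.FaceSucc d e)
    (he : e ∈ Y.bdry f) : d ∈ Y.bdry f := by
  obtain ⟨n, l, hrot, hchain⟩ := hY.exists_rotate_bdry he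
  have hlast := hchain.rel_getLast_head_of_append (List.cons_ne_nil e l) (List.cons_ne_nil e [])
  rw [hY.leftUnique_faceSucc h hlast, ← List.mem_rotate (n := n), hrot]
  exact List.getLast_mem _

theorem IsPrecover.exists_rotate_bdry_eq_append (hY : Y.IsPrecover) (hs : s.IsChain Y.FaceSucc)
    (hlen : s.length ≤ 4 * g) (hd : d ∈ s) (hdf : d ∈ Y.bdry f) :
    ∃ n t, (Y.bdry f).rotate n = s ++ t := by
  obtain ⟨e, s, rfl⟩ := List.exists_cons_of_ne_nil (List.ne_nil_of_mem hd)
  have he : e ∈ Y.bdry f := by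
    obtain ⟨x, y, hxy⟩ := List.append_of_mem hd
    have hhead : e ∈ x ++ [d] := by
      cases x <;> simp_all
    rw [hxy, List.append_cons] at hs
    exact hs.left_of_append.backwards_induction (· ∈ Y.bdry f) _
      (fun _ _ => hY.mem_bdry_of_faceSucc) (fun _ => List.getLast_concat ▸ hdf) e hhead
  obtain ⟨n, l, hrot, hl⟩ := hY.exists_rotate_bdry he
  have hlen' : (e :: l).length = 4 * g := by rw [← hrot, List.length_rotate, hY.length_bdry]
  obtain ⟨t, ht⟩ := prefix_of_isChain hY.rightUnique_faceSucc hs hl.left_of_append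
    (Nat.le_of_succ_le_succ (hlen.trans_eq hlen'.symm))
  exact ⟨n, t, by rw [hrot, ← ht, List.cons_append]⟩

theorem exists_mem_bdry_of_isChain_faceSucc
    (hblock : ∀ l, Y.BPath univ univ l → Y.IsBlock l → l.length + 3 ≠ 4 * g)
    (hs : s.IsChain Y.FaceSucc) (hne : s ≠ []) (hlen : s.length + 3 = 4 * g) :
    ∃ d ∈ s, ∃ f, d ∈ Y.bdry f := by
  by_contra! hoff
  have hgap {d e : Y.D} (h : Y.FaceSucc d e) : gapN (Y.dLet d) (Y.dLet e) = 0 := by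
    rw [h.2, Letter.gapN_next]
  refine hblock s ⟨hne, inSet_univ s, ?_⟩ ⟨hne, by omega, hs.imp fun _ _ h => ⟨h.1, hgap h⟩⟩ hlen
  refine hs.imp_of_mem_imp fun d e hd _ h => ⟨trivial, ⟨trivial, h.1, fun _ _ _ => ?_⟩, ?_⟩
  · rw [hgap h]
    exact Nat.zero_le _
  · rintro ⟨f, -, hf⟩
    have hd' := hf.subset (List.mem_cons_self ..)
    rw [List.mem_append, or_self] at hd'
    exact hoff d hd f hd'

end Faces

section Shortening

variable {g : ℕ} {Y : Complex g} {u v p q : Y.V} {d : Y.D} {c s x y : List Y.D}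

variable (Y) in
/-- A path from `u` to `v` which is not of minimal length in its homotopy class. -/
def IsShortenable (u v : Y.V) (c : List Y.D) : Prop :=
  ∃ c', c'.length < c.length ∧ Y.WalkFrom u v c' ∧ Y.Homotopic univ univ u v c c'

theorem IsShortenable.append (h : Y.IsShortenable p q s) (hx : Y.WalkFrom u p x)
    (hy : Y.WalkFrom q v y) : Y.IsShortenable u v (x ++ s ++ y) := by
  obtain ⟨s', hlen, hs', hss'⟩ := h
  refine ⟨x ++ s' ++ y, ?_, (hx.append hs').append hy, hss'.append hx hy⟩
  simp only [List.length_append]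
  omega

theorem IsShortenable.of_revW (h : Y.IsShortenable q p (Y.revW s)) : Y.IsShortenable p q s := by
  obtain ⟨s', hlen, hs', hss'⟩ := h
  refine ⟨Y.revW s', by rwa [length_revW, ← length_revW s], hs'.revW, ?_⟩
  simpa only [revW_revW] using hss'.revW

theorem isShortenable_backtrack (d : Y.D) :
    Y.IsShortenable (Y.dTail d) (Y.dTail d) [d, Y.dRev d] :=
  ⟨[], Nat.zero_lt_two, .nil _, homotopic_backtrack_nil d⟩

theorem IsPrecover.isShortenable_of_isChain_faceSucc (hg : 2 ≤ g) (hY : Y.IsPrecover)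
    (hblock : ∀ l, Y.BPath univ univ l → Y.IsBlock l → l.length + 3 ≠ 4 * g)
    (hs : Y.WalkFrom p q s) (hchain : s.IsChain Y.FaceSucc) (hlen : s.length + 3 = 4 * g) :
    Y.IsShortenable p q s := by
  have hne : s ≠ [] := List.ne_nil_of_length_pos (by omega)
  obtain ⟨d, hd, f, hdf⟩ := exists_mem_bdry_of_isChain_faceSucc hblock hchain hne hlen
  obtain ⟨n, t, hrot⟩ := hY.exists_rotate_bdry_eq_append hchain (by omega) hd hdf
  have ht_len : t.length = 3 := by
    have := congrArg List.length hrot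
    rw [List.length_rotate, hY.length_bdry, List.length_append] at this
    omega
  obtain ⟨z, hz⟩ := (hY.2 f).1
  obtain ⟨p', hloop⟩ := hz.rotate n
  obtain ⟨e, s', hs'⟩ := List.exists_cons_of_ne_nil hne
  obtain rfl : p = p' := by
    rw [hrot, hs', List.cons_append] at hloop
    rw [hs'] at hs
    exact (walkFrom_cons.1 hs).1.trans (walkFrom_cons.1 hloop).1.symm
  have hnull := homotopic_nil_of_faceLoop (sF := univ) hloop ⟨f, trivial, n, Or.inl rfl⟩
  rw [hrot] at hloop hnull
  obtain ⟨q', hs₁, ht⟩ := walkFrom_append.1 hloop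
  obtain rfl := hs.right_unique hs₁
  exact ⟨Y.revW t, by rw [length_revW]; omega, ht.revW, homotopic_revW_of_append_nil hs ht hnull⟩

theorem IsPrecover.isShortenable_of_wordOf_eq_iterate (hg : 2 ≤ g) (hY : Y.IsPrecover)
    (hblock : ∀ l, Y.BPath univ univ l → Y.IsBlock l → l.length + 3 ≠ 4 * g)
    (hs : Y.WalkFrom p q s) {r : Letter g}
    (hword : Y.wordOf s = List.iterate (Letter.next g) r (4 * g - 3)) :
    Y.IsShortenable p q s := by
  have hlen : s.length + 3 = 4 * g := by
    have := congrArg List.length hword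
    rw [wordOf, List.length_map, List.length_iterate] at this
    omega
  have hnext := isChain_iterate (Letter.next g) r (4 * g - 3)
  rw [← hword, wordOf, List.isChain_map] at hnext
  exact hY.isShortenable_of_isChain_faceSucc hg hblock hs (isChain_and hs.isChain_adj hnext) hlen

theorem IsPrecover.isShortenable_of_wordG_eq_one (hg : 2 ≤ g) (hY : Y.IsPrecover)
    (hblock : ∀ l, Y.BPath univ univ l → Y.IsBlock l → l.length + 3 ≠ 4 * g)
    (hc : Y.WalkFrom u v c) (hne : c ≠ []) (hword : wordG (Y.wordOf c) = 1) :
    Y.IsShortenable u v c := by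
  by_cases hred : c.IsChain fun d e => Y.dLet e ≠ (Y.dLet d).inv
  · have hne' : Y.wordOf c ≠ [] := fun h => hne (List.map_eq_nil_iff.1 h)
    obtain ⟨r, hr⟩ := hasLongArc_of_wordG_eq_one (by omega) hne' ((List.isChain_map _).2 hred) hword
    have hsub {w : List (Letter g)} (hw : w <:+: Y.wordOf c)
        (hshort : ∀ p q s, Y.WalkFrom p q s → Y.wordOf s = w → Y.IsShortenable p q s) :
        Y.IsShortenable u v c := by
      obtain ⟨x, s, y, rfl, hs⟩ := exists_append_of_infix_map hw
      obtain ⟨q, hxs, hy⟩ := walkFrom_append.1 hc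
      obtain ⟨p, hx, hs'⟩ := walkFrom_append.1 hxs
      exact (hshort p q s hs' hs).append hx hy
    rcases hr with hr | hr
    · exact hsub hr fun p q s hs hsw => hY.isShortenable_of_wordOf_eq_iterate hg hblock hs hsw
    · refine hsub hr fun p q s hs hsw => .of_revW ?_
      refine hY.isShortenable_of_wordOf_eq_iterate hg hblock hs.revW (r := r) ?_
      rw [wordOf_revW, hsw]
      exact TilingSystem.revWord_revWord (S := Letter.surfaceTiling (by omega)) _
  · rw [List.isChain_iff_forall_rel_of_append_cons_cons] at hred
    push Not at hred
    obtain ⟨d, e, x, y, rfl, hde⟩ := hred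
    obtain ⟨p, hx, hdy⟩ := walkFrom_append.1 hc
    obtain ⟨rfl, hey⟩ := walkFrom_cons.1 hdy
    obtain ⟨he, hy⟩ := walkFrom_cons.1 hey
    obtain rfl : e = Y.dRev d := hY.eq_of_dTail_eq (by rw [dTail_dRev, he]) hde
    rw [dHead_dRev] at hy
    simpa using (isShortenable_backtrack d).append hx hy

theorem IsPrecover.homotopic_nil_of_wordG_eq_one (hg : 2 ≤ g) (hY : Y.IsPrecover)
    (hblock : ∀ l, Y.BPath univ univ l → Y.IsBlock l → l.length + 3 ≠ 4 * g)
    (hc : Y.WalkFrom u u c) (hword : wordG (Y.wordOf c) = 1) :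
    Y.Homotopic univ univ u u c [] := by
  induction hn : c.length using Nat.strong_induction_on generalizing c with
  | _ n ih =>
    rcases eq_or_ne c [] with rfl | hne
    · exact .refl []
    · obtain ⟨c', hlt, hc', hcc'⟩ := hY.isShortenable_of_wordG_eq_one hg hblock hc hne hword
      rw [hcc'.wordG_eq fun f _ => (hY.2 f).2] at hword
      exact hcc'.trans (ih _ (hn ▸ hlt) hc' hword rfl)

end Shortening

end Complex

theorem statement_8_general {g : ℕ} (hg : 2 ≤ g) {Y Z : Complex g} (hY : Y.IsPrecover)
    (hZ : ∀ f, Z.wordOf (Z.bdry f) = relatorWord g)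
    (hblock : ∀ l, Y.BPath Set.univ Set.univ l → Y.IsBlock l → l.length + 3 ≠ 4 * g)
    (φ : Hom Y Z) {u v : Y.V} {c₁ c₂ : List Y.D} (h₁ : Y.WalkFrom u v c₁) (h₂ : Y.WalkFrom u v c₂)
    (h : Z.Homotopic Set.univ Set.univ (φ.mV u) (φ.mV v) (c₁.map φ.mD) (c₂.map φ.mD)) :
    Y.Homotopic Set.univ Set.univ u v c₁ c₂ := by
  have hword : wordG (Y.wordOf c₁) = wordG (Y.wordOf c₂) := by
    simpa only [Complex.wordOf_map_mD] using h.wordG_eq fun f _ => hZ f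
  have hloop : wordG (Y.wordOf (c₁ ++ Y.revW c₂)) = 1 := by
    rw [Complex.wordOf_append, wordG_append, Complex.wordG_wordOf_revW, hword, mul_inv_cancel]
  have hnull := hY.homotopic_nil_of_wordG_eq_one hg hblock (h₁.append h₂.revW) hloop
  simpa only [Complex.revW_revW] using Complex.homotopic_revW_of_append_nil h₁ h₂.revW hnull

/-- Every morphism `φ : Y → Z` of tiled surfaces with `Y`
boundary reduced is `π₁`-injective: the induced map of edge-path groups (at any
basepoint `v`) is injective. -/
theorem statement_8 (g : ℕ) (hg : 2 ≤ g) (Y Z : Complex g)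
    (hY : Y.IsTiledSurface) (hZ : Z.IsTiledSurface)
    (hbr : Y.BoundaryReduced Set.univ Set.univ) (φ : Hom Y Z) (v : Y.V)
    (c₁ c₂ : List Y.D) (h₁ : Y.WalkFrom v v c₁) (h₂ : Y.WalkFrom v v c₂)
    (h : Z.Homotopic Set.univ Set.univ (φ.mV v) (φ.mV v)
      (c₁.map φ.mD) (c₂.map φ.mD)) :
    Y.Homotopic Set.univ Set.univ v v c₁ c₂ :=
  statement_8_general hg (hY.isPrecover (by omega)) (fun f => ((hZ.isPrecover (by omega)).2 f).2)
    (fun l hl hl' _ => hbr.1 l hl ⟨hl', by omega⟩) φ h₁ h₂ h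

end CS

end
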